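/- arXiv:2103.08844 — 2 statements merged into one kernel-verified Lean document; each statement's English description precedes it below -/
import Mathlib

section
/- For every integer k ≥ 2 and every real p with 0 < p ≤ q_k, the integral ∫_{ℝ^N} |E_k1(x)|^p dx is infinite. -/
open MeasureTheory Real Set
open scoped ENNReal

noncomputable section

/-- Index set for multi-indices `β = (β₁, β₂) ∈ ℕ²` with `1 ≤ β₁ + β₂ ≤ k`;
its cardinality is `N = (k+1)(k+2)/2 − 1`. -/
def Idx (k : ℕ) : Type :=
  {β : Fin (k + 1) × Fin (k + 1) // 1 ≤ (β.1 : ℕ) + (β.2 : ℕ) ∧ (β.1 : ℕ) + (β.2 : ℕ) ≤ k}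

instance (k : ℕ) : Fintype (Idx k) := by unfold Idx; infer_instance

/-- The phase polynomial `P(ξ; x) = ∑_{1 ≤ |β| ≤ k} x_β ξ₁^{β₁} ξ₂^{β₂}`. -/
def Pphase (k : ℕ) (x : Idx k → ℝ) (ξ : Fin 2 → ℝ) : ℝ :=
  ∑ β : Idx k, x β * ξ 0 ^ (β.1.1 : ℕ) * ξ 1 ^ (β.1.2 : ℕ)

/-- `E_k1(x) = ∫_{[0,1]²} e(P(ξ; x)) dξ` with `e(t) = exp(2πit)`. -/
def Eone (k : ℕ) (x : Idx k → ℝ) : ℂ :=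
  ∫ ξ in Icc (0 : Fin 2 → ℝ) 1, Complex.exp (2 * Real.pi * Complex.I * (Pphase k x ξ))

/-!
Expand `P(ξ; x)` in powers of `ξ₁ - ℓ(ξ₂)`, where the affine `ℓ` is chosen to kill the term of
degree `k - 1`. If the leading coefficient of `x` is about `r ^ k`, the line `ξ₁ = ℓ(ξ₂)` stays
well inside the unit square, and the coefficients of the terms of degree `j ≤ k - 2` are
`O(ε r ^ j)`, then every slice in `ξ₁` is a small perturbation of `∫ cos (2π (r s) ^ k) ds`, a
positive number of order `1 / r`; hence `|E_k1(x)| ≳ 1 / r`. Passing from `x` to the expanded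
coefficients is a triangular shear, so it preserves volume and the set of such `x` has volume
about `r ^ q_k`. Each dyadic `r` therefore contributes at least a constant to the integral of
`|E_k1| ^ p` as soon as `p ≤ q_k`.
-/

open Filter Polynomial
open scoped Polynomial.Bivariate

section OscillatoryIntegral

theorem hasDerivAt_sinc {x : ℝ} (hx : x ≠ 0) : HasDerivAt sinc ((cos x - sinc x) / x) x := by
  have hquot : HasDerivAt (fun y => sin y / y) ((cos x * x - sin x * 1) / x ^ 2) x :=
    (hasDerivAt_sin x).div (hasDerivAt_id x) hx
  have heq : sinc =ᶠ[nhds x] fun y => sin y / y :=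
    (eventually_ne_nhds hx).mono fun y hy => sinc_of_ne_zero hy
  refine (hquot.congr_of_eventuallyEq heq).congr_deriv ?_
  rw [sinc_of_ne_zero hx]
  field_simp

theorem sinc_two_mul (x : ℝ) : sinc (2 * x) = sinc x * cos x := by
  rcases eq_or_ne x 0 with rfl | hx
  · simp
  · rw [sinc_of_ne_zero hx, sinc_of_ne_zero (mul_ne_zero two_ne_zero hx), sin_two_mul]
    field_simp

theorem hasDerivAt_sinc_mul_pow (n : ℕ) {c s : ℝ} (hc : c ≠ 0) (hs : s ≠ 0) :
    HasDerivAt (fun s => sinc (c * s ^ (n + 1)))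
      ((n + 1) * (cos (c * s ^ (n + 1)) - sinc (c * s ^ (n + 1))) / s) s := by
  have hpow : HasDerivAt (fun s => c * s ^ (n + 1)) (c * ((n + 1) * s ^ n)) s := by
    simpa using (hasDerivAt_pow (n + 1) s).const_mul c
  refine ((hasDerivAt_sinc (mul_ne_zero hc (pow_ne_zero _ hs))).comp s hpow).congr_deriv ?_
  field_simp
  ring

/- Two integrations by parts, with the boundary terms written through `sinc` so that they extend
continuously to `0`. The last two terms are nonnegative. -/
theorem integral_cos_two_pi_mul_pow (n : ℕ) {S : ℝ} (hS : 0 ≤ S) :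
    ∫ s in (0 : ℝ)..S, cos (2 * π * s ^ (n + 1)) =
      S * sinc (2 * π * S ^ (n + 1)) / (n + 1) +
        n / (2 * (n + 1) ^ 2) * (S * sinc (π * S ^ (n + 1)) ^ 2) +
        n * (2 * n + 1) / (2 * (n + 1) ^ 2) *
          ∫ s in (0 : ℝ)..S, sinc (π * s ^ (n + 1)) ^ 2 := by
  let G : ℝ → ℝ := fun s => s * sinc (2 * π * s ^ (n + 1)) / (n + 1) +
    n / (2 * (n + 1) ^ 2) * (s * sinc (π * s ^ (n + 1)) ^ 2)
  have hG : ∀ s ∈ Ioo 0 S, HasDerivAt G (cos (2 * π * s ^ (n + 1)) -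
      n * (2 * n + 1) / (2 * (n + 1) ^ 2) * sinc (π * s ^ (n + 1)) ^ 2) s := by
    intro s hs
    have hs0 : s ≠ 0 := hs.1.ne'
    have hfst := ((hasDerivAt_id s).fun_mul
      (hasDerivAt_sinc_mul_pow n two_pi_pos.ne' hs0)).div_const (n + 1 : ℝ)
    have hsnd := ((hasDerivAt_id s).fun_mul
      ((hasDerivAt_sinc_mul_pow n pi_ne_zero hs0).fun_pow 2)).const_mul (n / (2 * (n + 1) ^ 2) : ℝ)
    refine (hfst.add hsnd).congr_deriv ?_
    simp only [id, mul_assoc 2 π, sinc_two_mul]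
    field_simp
    ring
  have hcos : Continuous fun s => cos (2 * π * s ^ (n + 1)) := by fun_prop
  have hsinc : Continuous fun s =>
      n * (2 * n + 1) / (2 * (n + 1) ^ 2) * sinc (π * s ^ (n + 1)) ^ 2 := by fun_prop
  have hFTC := intervalIntegral.integral_eq_sub_of_hasDerivAt_of_le hS
    (show ContinuousOn G (Icc 0 S) by fun_prop) hG ((hcos.sub hsinc).intervalIntegrable _ _)
  rw [intervalIntegral.integral_sub (hcos.intervalIntegrable _ _) (hsinc.intervalIntegrable _ _),
    intervalIntegral.integral_const_mul] at hFTC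
  simp only [G, zero_mul, zero_div, mul_zero, add_zero, sub_zero] at hFTC
  linarith

theorem neg_inv_le_mul_sinc_pow (n : ℕ) {S : ℝ} (hS : 1 ≤ S) :
    -S⁻¹ ≤ S * sinc (2 * π * S ^ (n + 2)) := by
  have : 0 < S := by linarith
  have hden : S ≤ 2 * π * S ^ (n + 1) :=
    calc S = 1 * S ^ 1 := by ring
      _ ≤ 2 * π * S ^ (n + 1) := by
        gcongr
        · linarith [pi_gt_three]
        · omega
  calc -S⁻¹ ≤ -(2 * π * S ^ (n + 1))⁻¹ := by gcongr
    _ = -1 / (2 * π * S ^ (n + 1)) := by ring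
    _ ≤ sin (2 * π * S ^ (n + 2)) / (2 * π * S ^ (n + 1)) := by gcongr; exact neg_one_le_sin _
    _ = S * sinc (2 * π * S ^ (n + 2)) := by
      rw [sinc_of_ne_zero (by positivity)]
      field_simp
      ring

theorem exists_eventually_le_integral_cos_pow (n : ℕ) :
    ∃ δ > 0, ∀ᶠ S in atTop, δ ≤ ∫ s in (0 : ℝ)..S, cos (2 * π * s ^ (n + 2)) := by
  have hcont : Continuous fun s => sinc (π * s ^ (n + 2)) ^ 2 := by fun_prop
  let c : ℝ := (n + 1 : ℕ) * (2 * (n + 1 : ℕ) + 1) / (2 * ((n + 1 : ℕ) + 1) ^ 2)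
  let J : ℝ → ℝ := fun S => c * ∫ s in (0 : ℝ)..S, sinc (π * s ^ (n + 2)) ^ 2
  have hJ : 0 < J 1 := mul_pos (by positivity) <| intervalIntegral.integral_pos zero_lt_one
    hcont.continuousOn (fun s _ => sq_nonneg _) ⟨0, by simp⟩
  refine ⟨J 1 / 2, by positivity, ?_⟩
  filter_upwards [eventually_ge_atTop 1, eventually_ge_atTop (J 1 / 2)⁻¹] with S hS hSJ
  have hS0 : 0 < S := by linarith
  have hmono : J 1 ≤ J S := mul_le_mul_of_nonneg_left (intervalIntegral.integral_mono_interval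
    le_rfl zero_le_one hS (ae_of_all _ fun s => sq_nonneg _) (hcont.intervalIntegrable _ _))
    (by positivity)
  have hboundary : -S⁻¹ ≤ S * sinc (2 * π * S ^ (n + 2)) / ((n + 1 : ℕ) + 1) := by
    rw [le_div_iff₀ (by positivity)]
    refine le_trans ?_ (neg_inv_le_mul_sinc_pow n hS)
    have : 0 ≤ S⁻¹ * (n + 1 : ℕ) := by positivity
    linarith
  have hinv : S⁻¹ ≤ J 1 / 2 := inv_le_of_inv_le₀ (by positivity) hSJ
  have hsq : 0 ≤ ((n + 1 : ℕ) : ℝ) / (2 * ((n + 1 : ℕ) + 1) ^ 2) *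
    (S * sinc (π * S ^ (n + 2)) ^ 2) := by positivity
  rw [integral_cos_two_pi_mul_pow (n + 1) hS0.le]
  linarith

theorem neg_inv_le_integral_cos_of_convex_phase {f f' f'' : ℝ → ℝ} {M S : ℝ} (hMS : M ≤ S)
    (hf : ∀ s ∈ Icc M S, HasDerivAt f (f' s) s) (hf' : ∀ s ∈ Icc M S, HasDerivAt f' (f'' s) s)
    (hpos : ∀ s ∈ Icc M S, 0 < f' s) (hconv : ∀ s ∈ Icc M S, 0 ≤ f'' s) :
    -(f' M)⁻¹ ≤ ∫ s in M..S, cos (2 * π * f s) := by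
  have hfc : ContinuousOn f (Icc M S) := fun s hs => (hf s hs).continuousAt.continuousWithinAt
  let B : ℝ → ℝ := fun s => (sin (2 * π * f s) + 1) / (2 * π * f' s)
  have hB : ∀ s ∈ Icc M S, HasDerivAt B (cos (2 * π * f s) -
      (sin (2 * π * f s) + 1) * f'' s / (2 * π * f' s ^ 2)) s := by
    intro s hs
    have := hpos s hs
    refine ((((hf s hs).const_mul (2 * π)).sin.add_const 1).div ((hf' s hs).const_mul (2 * π))
      (by positivity)).congr_deriv ?_
    field_simp
  have hBc : ContinuousOn B (Icc M S) := fun s hs => (hB s hs).continuousAt.continuousWithinAt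
  have hsin : ∀ s, 0 ≤ sin (2 * π * f s) + 1 := fun s => by linarith [neg_one_le_sin (2 * π * f s)]
  have hFTC : B S - B M ≤ ∫ s in M..S, cos (2 * π * f s) := by
    refine intervalIntegral.sub_le_integral_of_hasDeriv_right_of_le hMS hBc
      (fun s hs => (hB s (Ioo_subset_Icc_self hs)).hasDerivWithinAt)
      ((by fun_prop : ContinuousOn (fun s => cos (2 * π * f s)) _).integrableOn_Icc) fun s hs => ?_
    have := hconv s (Ioo_subset_Icc_self hs)
    have := hsin s
    exact sub_le_self _ (by positivity)
  have hBS : 0 ≤ B S := by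
    have := hpos S (right_mem_Icc.2 hMS)
    have := hsin S
    positivity
  have hBM : B M ≤ (f' M)⁻¹ := by
    have := hpos M (left_mem_Icc.2 hMS)
    rw [inv_eq_one_div, div_le_div_iff₀ (by positivity) this]
    nlinarith [sin_le_one (2 * π * f M), pi_gt_three]
  linarith

theorem abs_eval_le_mul_pow {n : ℕ} {q : ℝ[X]} {ε M s : ℝ} (hq : q.natDegree ≤ n)
    (hcoeff : ∀ j, |q.coeff j| ≤ ε) (hM : 1 ≤ M) (hs : |s| ≤ M) :
    |q.eval s| ≤ (n + 1) * ε * M ^ n := by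
  have hε : 0 ≤ ε := (abs_nonneg _).trans (hcoeff 0)
  calc |q.eval s| = |∑ j ∈ Finset.range (n + 1), q.coeff j * s ^ j| := by
        rw [eval_eq_sum_range' (Nat.lt_succ_of_le hq)]
    _ ≤ ∑ j ∈ Finset.range (n + 1), |q.coeff j * s ^ j| := Finset.abs_sum_le_sum_abs _ _
    _ ≤ ∑ _j ∈ Finset.range (n + 1), ε * M ^ n := by
        refine Finset.sum_le_sum fun j hj => ?_
        rw [abs_mul, abs_pow]
        gcongr
        · exact hcoeff j
        · exact (pow_le_pow_left₀ (abs_nonneg s) hs j).trans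
            (pow_le_pow_right₀ hM (Nat.lt_succ_iff.1 (Finset.mem_range.1 hj)))
    _ = (n + 1) * ε * M ^ n := by simp [mul_assoc]

theorem abs_coeff_derivative_le {n : ℕ} {q : ℝ[X]} {ε : ℝ} (hq : q.natDegree ≤ n)
    (hcoeff : ∀ j, |q.coeff j| ≤ ε) (j : ℕ) : |q.derivative.coeff j| ≤ ε * n := by
  have hε : 0 ≤ ε := (abs_nonneg _).trans (hcoeff 0)
  rw [coeff_derivative]
  rcases lt_or_ge j n with hj | hj
  · have hj' : (j : ℝ) + 1 ≤ n := by exact_mod_cast hj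
    rw [abs_mul, abs_of_nonneg (by positivity : (0 : ℝ) ≤ j + 1)]
    gcongr
    exact hcoeff _
  · rw [coeff_eq_zero_of_natDegree_lt (by omega), zero_mul, abs_zero]
    positivity

theorem abs_eval_derivative_le_mul_pow {n : ℕ} {q : ℝ[X]} {ε s : ℝ} (hq : q.natDegree ≤ n)
    (hcoeff : ∀ j, |q.coeff j| ≤ ε) (hs : 1 ≤ s) :
    |q.derivative.eval s| ≤ (n + 1) ^ 2 * ε * s ^ n := by
  have hε : 0 ≤ ε := (abs_nonneg _).trans (hcoeff 0)
  calc |q.derivative.eval s| ≤ (n + 1) * (ε * n) * s ^ n :=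
        abs_eval_le_mul_pow ((natDegree_derivative_le q).trans (by omega))
          (abs_coeff_derivative_le hq hcoeff) hs (abs_of_nonneg (by linarith)).le
    _ ≤ (n + 1) * (ε * (n + 1)) * s ^ n := by gcongr; exact le_add_of_nonneg_right zero_le_one
    _ = (n + 1) ^ 2 * ε * s ^ n := by ring

theorem neg_inv_le_integral_cos_pow_add_eval {n : ℕ} {q : ℝ[X]} {ε M S : ℝ}
    (hε : (n + 1) ^ 3 * ε ≤ 1) (hq : q.natDegree ≤ n) (hcoeff : ∀ j, |q.coeff j| ≤ ε)
    (hM : 1 ≤ M) (hMS : M ≤ S) :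
    -M⁻¹ ≤ ∫ s in M..S, cos (2 * π * (s ^ (n + 2) + q.eval s)) := by
  have hε0 : 0 ≤ ε := (abs_nonneg _).trans (hcoeff 0)
  have : 0 ≤ (n + 1) ^ 2 * ε := by positivity
  have : (0 : ℝ) ≤ n * ((n + 1) ^ 2 * ε) := by positivity
  let f' : ℝ → ℝ := fun s => (n + 2 : ℕ) * s ^ (n + 1) + q.derivative.eval s
  let f'' : ℝ → ℝ := fun s =>
    (n + 2 : ℕ) * ((n + 1 : ℕ) * s ^ n) + q.derivative.derivative.eval s
  have hf : ∀ s, HasDerivAt (fun s => s ^ (n + 2) + q.eval s) (f' s) s := fun s =>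
    (hasDerivAt_pow (n + 2) s).add (q.hasDerivAt s)
  have hf' : ∀ s, HasDerivAt f' (f'' s) s := fun s =>
    ((hasDerivAt_pow (n + 1) s).const_mul _).add (q.derivative.hasDerivAt s)
  have hle_f' : ∀ s, 1 ≤ s → s ≤ f' s := fun s hs => by
    have hbound : |q.derivative.eval s| ≤ s ^ (n + 1) :=
      calc |q.derivative.eval s| ≤ (n + 1) ^ 2 * ε * s ^ n :=
            abs_eval_derivative_le_mul_pow hq hcoeff hs
        _ ≤ 1 * s ^ (n + 1) := by gcongr <;> linarith
        _ = s ^ (n + 1) := one_mul _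
    have hpow : s ≤ s ^ (n + 1) := le_self_pow₀ hs (by omega)
    have : 0 ≤ n * s ^ (n + 1) := by positivity
    simp only [f']
    push_cast
    linarith [(abs_le.1 hbound).1]
  have hf''_nonneg : ∀ s, 1 ≤ s → 0 ≤ f'' s := fun s hs => by
    have hbound : |q.derivative.derivative.eval s| ≤ s ^ n :=
      calc |q.derivative.derivative.eval s| ≤ (n + 1) ^ 2 * (ε * n) * s ^ n :=
            abs_eval_derivative_le_mul_pow ((natDegree_derivative_le q).trans (by omega))
              (abs_coeff_derivative_le hq hcoeff) hs
        _ ≤ 1 * s ^ n := by gcongr; linarith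
        _ = s ^ n := one_mul _
    have hpow : 0 ≤ (n * n + 3 * n + 1) * s ^ n := by positivity
    simp only [f'']
    push_cast
    linarith [(abs_le.1 hbound).1]
  calc -M⁻¹ ≤ -(f' M)⁻¹ := by have := hle_f' M hM; gcongr
    _ ≤ _ := neg_inv_le_integral_cos_of_convex_phase hMS (fun s _ => hf s) (fun s _ => hf' s)
        (fun s hs => by linarith [hle_f' s (hM.trans hs.1), hs.1])
        fun s hs => hf''_nonneg s (hM.trans hs.1)

theorem abs_integral_cos_sub_integral_cos_le {f g : ℝ → ℝ} {C M : ℝ} (hf : Continuous f)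
    (hg : Continuous g) (hM : 0 ≤ M) (hfg : ∀ s ∈ Icc 0 M, |f s - g s| ≤ C) :
    |(∫ s in (0 : ℝ)..M, cos (f s)) - ∫ s in (0 : ℝ)..M, cos (g s)| ≤ C * M := by
  have hfc : Continuous fun s => cos (f s) := by fun_prop
  have hgc : Continuous fun s => cos (g s) := by fun_prop
  rw [← intervalIntegral.integral_sub (hfc.intervalIntegrable _ _) (hgc.intervalIntegrable _ _),
    ← norm_eq_abs]
  refine (intervalIntegral.norm_integral_le_of_norm_le_const fun s hs => ?_).trans_eq
    (by rw [sub_zero, abs_of_nonneg hM])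
  rw [uIoc_of_le hM] at hs
  exact (abs_cos_sub_cos_le _ _).trans (hfg s (Ioc_subset_Icc_self hs))

theorem exists_le_integral_cos_pow_add_eval (n : ℕ) :
    ∃ δ > 0, ∃ ε > 0, ∃ M ≥ (1 : ℝ), ∀ S ≥ M, ∀ q : ℝ[X], q.natDegree ≤ n →
      (∀ j, |q.coeff j| ≤ ε) → δ ≤ ∫ s in (0 : ℝ)..S, cos (2 * π * (s ^ (n + 2) + q.eval s)) := by
  obtain ⟨δ, hδ, hmodel⟩ := exists_eventually_le_integral_cos_pow n
  obtain ⟨M, hM, hM1, hMδ⟩ := (hmodel.and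
    ((eventually_ge_atTop 1).and (eventually_ge_atTop (δ / 4)⁻¹))).exists
  have hM0 : 0 < M := by linarith
  have hMinv : M⁻¹ ≤ δ / 4 := inv_le_of_inv_le₀ (by positivity) hMδ
  let ε : ℝ := min (1 / (n + 1) ^ 3) (δ / 4 / (2 * π * ((n + 1) * M ^ n) * M))
  have hε : (n + 1) ^ 3 * ε ≤ 1 := (le_div_iff₀' (by positivity)).1 (min_le_left _ _)
  have hεM : 2 * π * ((n + 1) * M ^ n) * M * ε ≤ δ / 4 :=
    (le_div_iff₀' (by positivity)).1 (min_le_right _ _)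
  refine ⟨δ / 2, by positivity, ε, by positivity, M, hM1, fun S hS q hq hcoeff => ?_⟩
  have hcont : Continuous fun s => cos (2 * π * (s ^ (n + 2) + q.eval s)) := by fun_prop
  have hcentral : |(∫ s in (0 : ℝ)..M, cos (2 * π * (s ^ (n + 2) + q.eval s))) -
      ∫ s in (0 : ℝ)..M, cos (2 * π * s ^ (n + 2))| ≤ δ / 4 := by
    refine (abs_integral_cos_sub_integral_cos_le (C := 2 * π * ((n + 1) * ε * M ^ n))
      (by fun_prop) (by fun_prop) hM0.le fun s hs => ?_).trans (by linarith)
    rw [← mul_sub, add_sub_cancel_left, abs_mul, abs_of_pos two_pi_pos]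
    gcongr
    exact abs_eval_le_mul_pow hq hcoeff hM1 (by rw [abs_of_nonneg hs.1]; exact hs.2)
  have htail := neg_inv_le_integral_cos_pow_add_eval hε hq hcoeff hM1 hS
  rw [← intervalIntegral.integral_add_adjacent_intervals (hcont.intervalIntegrable 0 M)
    (hcont.intervalIntegrable M S)]
  linarith [(abs_le.1 hcentral).1]

theorem natDegree_comp_C_mul_X_le {R : Type*} [Semiring R] (p : R[X]) (a : R) :
    (p.comp (C a * X)).natDegree ≤ p.natDegree :=
  natDegree_le_iff_coeff_eq_zero.2 fun j hj => by
    rw [comp_C_mul_X_coeff, coeff_eq_zero_of_natDegree_lt hj, zero_mul]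

theorem cos_neg_one_pow_mul (n : ℕ) (x : ℝ) : cos ((-1) ^ n * x) = cos x := by
  rcases neg_one_pow_eq_or ℝ n with h | h <;> simp [h]

theorem cos_mul_neg_pow_add_eval_neg (a s : ℝ) (m : ℕ) (p : ℝ[X]) :
    cos (a * ((-s) ^ m + p.eval (-s))) =
      cos (a * (s ^ m + (C ((-1) ^ m) * p.comp (C (-1) * X)).eval s)) := by
  rw [← cos_neg_one_pow_mul m]
  congr 1
  have hsq : ((-1 : ℝ) ^ m) * (-1) ^ m = 1 := by rw [← mul_pow]; norm_num
  simp only [neg_pow s, eval_mul, eval_C, eval_comp, eval_X, neg_mul, one_mul]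
  linear_combination a * s ^ m * hsq

theorem exists_le_integral_cos_sub_pow_add_eval (n : ℕ) :
    ∃ δ > 0, ∃ ε > 0, ∃ M ≥ (1 : ℝ), ∀ μ ≥ M, ∀ w ∈ Icc (1 / 4 : ℝ) (3 / 4), ∀ q : ℝ[X],
      q.natDegree ≤ n → (∀ j, |q.coeff j| ≤ ε * μ ^ j) →
        δ / μ ≤ ∫ y in (0 : ℝ)..1,
          cos (2 * π * (μ ^ (n + 2) * (y - w) ^ (n + 2) + q.eval (y - w))) := by
  obtain ⟨δ, hδ, ε, hε, M, hM1, hmain⟩ := exists_le_integral_cos_pow_add_eval n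
  refine ⟨2 * δ, by positivity, ε, hε, 4 * M, by linarith, fun μ hμ w hw q hq hcoeff => ?_⟩
  have hμ0 : 0 < μ := by linarith
  let p : ℝ[X] := q.comp (C μ⁻¹ * X)
  have hp_eval : ∀ s, p.eval (μ * s) = q.eval s := fun s => by
    simp [p, eval_comp, hμ0.ne']
  have hp_deg : p.natDegree ≤ n := (natDegree_comp_C_mul_X_le _ _).trans hq
  have hp_coeff : ∀ j, |p.coeff j| ≤ ε := fun j => by
    rw [comp_C_mul_X_coeff, abs_mul, inv_pow, abs_inv, abs_of_pos (pow_pos hμ0 j)]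
    exact (mul_inv_le_iff₀ (pow_pos hμ0 j)).2 (hcoeff j)
  let h : ℝ → ℝ := fun s => cos (2 * π * (s ^ (n + 2) + p.eval s))
  have hcont : Continuous h := by fun_prop
  have hright : δ ≤ ∫ s in (0 : ℝ)..μ * (1 - w), h s :=
    hmain _ (by nlinarith [hw.2]) p hp_deg hp_coeff
  have hleft : δ ≤ ∫ s in (0 : ℝ)..μ * w, h (-s) := by
    have hcoeff_neg : ∀ j, |(C ((-1) ^ (n + 2)) * p.comp (C (-1) * X)).coeff j| ≤ ε := fun j => by
      rw [coeff_C_mul, comp_C_mul_X_coeff]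
      simpa [abs_mul] using hp_coeff j
    simp only [h, cos_mul_neg_pow_add_eval_neg]
    exact hmain _ (by nlinarith [hw.1]) _ ((natDegree_C_mul_le _ _).trans
      ((natDegree_comp_C_mul_X_le _ _).trans hp_deg)) hcoeff_neg
  calc 2 * δ / μ ≤ μ⁻¹ * ((∫ s in (0 : ℝ)..μ * w, h (-s)) + ∫ s in (0 : ℝ)..μ * (1 - w), h s) := by
        rw [div_eq_inv_mul]
        gcongr
        linarith
    _ = μ⁻¹ * ∫ s in μ * (0 - w)..μ * (1 - w), h s := by
        rw [intervalIntegral.integral_comp_neg, zero_sub, mul_neg, neg_zero,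
          intervalIntegral.integral_add_adjacent_intervals (hcont.intervalIntegrable _ _)
            (hcont.intervalIntegrable _ _)]
    _ = ∫ y in (0 : ℝ)..1, h (μ * (y - w)) := by
        rw [intervalIntegral.integral_comp_sub_right (fun y => h (μ * y)) w,
          intervalIntegral.integral_comp_mul_left h hμ0.ne', smul_eq_mul]
    _ = _ := by simp only [h, hp_eval, mul_pow]

end OscillatoryIntegral

section Shear

variable {ι : Type*} [Fintype ι] {G : ι → Type*} [∀ i, AddGroup (G i)]
  [∀ i, MeasurableSpace (G i)] [∀ i, MeasurableAdd₂ (G i)] (μ : ∀ i, Measure (G i))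
  [∀ i, SigmaFinite (μ i)] [∀ i, (μ i).IsAddRightInvariant]

theorem measurePreserving_update_add [DecidableEq ι] (i : ι) {g : (∀ j, G j) → G i}
    (hg : Measurable g) (hgi : ∀ x t, g (Function.update x i t) = g x) :
    MeasurePreserving (fun x => Function.update x i (x i + g x))
      (Measure.pi μ) (Measure.pi μ) := by
  have hmeas : Measurable fun x => Function.update x i (x i + g x) :=
    measurable_pi_iff.2 fun j => by
      rcases eq_or_ne j i with rfl | hji
      · simpa [Pi.add_def] using (measurable_pi_apply j).add hg
      · simpa [hji] using measurable_pi_apply j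
  refine ⟨hmeas, Measure.ext_of_lintegral _ fun f hf => ?_⟩
  rw [lintegral_map hf hmeas, lintegral_eq_lmarginal_univ 0, lintegral_eq_lmarginal_univ 0,
    lmarginal_erase' (fun x => f (Function.update x i (x i + g x))) (hf.comp hmeas)
      (Finset.mem_univ i),
    lmarginal_erase' _ hf (Finset.mem_univ i)]
  congr with x
  simp only [hgi, Function.update_self, Function.update_idem]
  exact lintegral_add_right_eq_self (fun t => f (Function.update x i t)) (g x)

theorem measurePreserving_add_of_triangular {α : Type*} [LinearOrder α] (r : ι → α)
    {g : ∀ i, (∀ j, G j) → G i} (hg : ∀ i, Measurable (g i))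
    (hdep : ∀ i x y, (∀ j, r i < r j → x j = y j) → g i x = g i y) :
    MeasurePreserving (fun x i => x i + g i x) (Measure.pi μ) (Measure.pi μ) := by
  classical
  suffices h : ∀ s : Finset ι, MeasurePreserving (fun x i => if i ∈ s then x i + g i x else x i)
      (Measure.pi μ) (Measure.pi μ) by simpa using h Finset.univ
  intro s
  induction s using Finset.induction_on_max_value r with
  | empty =>
    simp only [Finset.notMem_empty, if_false]
    exact MeasurePreserving.id _
  | insert a s ha hmax ih =>
    have hupdate := measurePreserving_update_add μ a (hg a) fun x t =>
      hdep a _ _ fun j hj => Function.update_of_ne (by rintro rfl; exact hj.false) _ _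
    convert hupdate.comp ih using 1
    funext x i
    have hga : g a (fun i => if i ∈ s then x i + g i x else x i) = g a x :=
      hdep a _ _ fun j hj => if_neg fun hjs => hj.not_ge (hmax j hjs)
    rcases eq_or_ne i a with rfl | hia
    · simp [hga, ha]
    · simp [hia]

end Shear

section StripPolynomial

variable {k n : ℕ}

/-- The element `(i, l)` of the index set. -/
def Idx.of (i l : ℕ) (h : 1 ≤ i + l ∧ i + l ≤ k) : Idx k :=
  ⟨(⟨i, by omega⟩, ⟨l, by omega⟩), h⟩

@[simp] theorem Idx.fst_of {i l : ℕ} (h : 1 ≤ i + l ∧ i + l ≤ k) :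
    ((Idx.of i l h).1.1 : ℕ) = i := rfl

@[simp] theorem Idx.snd_of {i l : ℕ} (h : 1 ≤ i + l ∧ i + l ≤ k) :
    ((Idx.of i l h).1.2 : ℕ) = l := rfl

theorem Idx.ext_iff {β γ : Idx k} :
    β = γ ↔ (β.1.1 : ℕ) = γ.1.1 ∧ (β.1.2 : ℕ) = γ.1.2 :=
  Subtype.ext_iff.trans (Prod.ext_iff.trans (and_congr Fin.ext_iff Fin.ext_iff))

theorem Idx.eq_of {β : Idx k} {i l : ℕ} (h : 1 ≤ i + l ∧ i + l ≤ k) (hi : (β.1.1 : ℕ) = i)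
    (hl : (β.1.2 : ℕ) = l) : β = Idx.of i l h :=
  Idx.ext_iff.2 ⟨hi, hl⟩

/-- `P(ξ; x)` as a polynomial in `ξ₁` whose coefficients are polynomials in `ξ₂`. -/
def phasePoly (x : Idx k → ℝ) : ℝ[X][Y] :=
  ∑ β : Idx k, monomial β.1.1 (monomial β.1.2 (x β))

theorem Pphase_eq_eval (x : Idx k → ℝ) (ξ : Fin 2 → ℝ) :
    Pphase k x ξ = ((phasePoly x).map (evalRingHom (ξ 1))).eval (ξ 0) := by
  simp only [Pphase, phasePoly, Polynomial.map_sum, map_monomial, coe_evalRingHom,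
    eval_finsetSum, eval_monomial]
  exact Finset.sum_congr rfl fun β _ => by ring

theorem Pphase_eq_eval_taylor (x : Idx k → ℝ) (ℓ : ℝ[X]) (ξ : Fin 2 → ℝ) :
    Pphase k x ξ =
      ((taylor ℓ (phasePoly x)).map (evalRingHom (ξ 1))).eval (ξ 0 - ℓ.eval (ξ 1)) := by
  rw [map_taylor, coe_evalRingHom, taylor_eval, sub_add_cancel, Pphase_eq_eval]

theorem natDegree_phasePoly_le (x : Idx k → ℝ) : (phasePoly x).natDegree ≤ k :=
  natDegree_sum_le_of_forall_le _ _ fun β _ =>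
    (natDegree_monomial_le _).trans (Nat.lt_succ_iff.1 β.1.1.2)

theorem coeff_taylor_phasePoly (x : Idx k → ℝ) (ℓ : ℝ[X]) (j : ℕ) :
    (taylor ℓ (phasePoly x)).coeff j = ∑ β : Idx k,
      ((β.1.1 : ℕ).choose j : ℝ[X]) * monomial β.1.2 (x β) * ℓ ^ ((β.1.1 : ℕ) - j) := by
  simp only [phasePoly, map_sum, finsetSum_coeff, taylor_coeff, hasseDeriv_monomial,
    eval_monomial]

theorem natDegree_coeff_taylor_phasePoly_le (x : Idx k → ℝ) {ℓ : ℝ[X]} (hℓ : ℓ.natDegree ≤ 1)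
    (j : ℕ) : ((taylor ℓ (phasePoly x)).coeff j).natDegree ≤ k - j := by
  rw [coeff_taylor_phasePoly]
  refine natDegree_sum_le_of_forall_le _ _ fun β _ => ?_
  rcases lt_or_ge (β.1.1 : ℕ) j with hj | hj
  · simp [Nat.choose_eq_zero_of_lt hj]
  · refine (natDegree_mul_le_of_le (natDegree_mul_le_of_le (natDegree_natCast _).le
      (natDegree_monomial_le _)) (natDegree_pow_le_of_le _ hℓ)).trans ?_
    have := β.2.2
    omega

theorem coeff_taylor_phasePoly_top (x : Idx (n + 2) → ℝ) (ℓ : ℝ[X]) :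
    (taylor ℓ (phasePoly x)).coeff (n + 2) = C (x (Idx.of (n + 2) 0 (by omega))) := by
  rw [coeff_taylor_phasePoly, Finset.sum_eq_single (Idx.of (n + 2) 0 (by omega))]
  · simp
  · intro β _ hβ
    have hlt : (β.1.1 : ℕ) < n + 2 := by
      by_contra hlt
      have := β.2.2
      exact hβ (Idx.eq_of _ (by omega) (by omega))
    simp [Nat.choose_eq_zero_of_lt hlt]
  · simp

theorem coeff_taylor_phasePoly_subtop (x : Idx (n + 2) → ℝ) (ℓ : ℝ[X]) :
    (taylor ℓ (phasePoly x)).coeff (n + 1) =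
      C (x (Idx.of (n + 1) 0 (by omega))) + C (x (Idx.of (n + 1) 1 (by omega))) * X +
        C ((n + 2) * x (Idx.of (n + 2) 0 (by omega))) * ℓ := by
  classical
  let s : Finset (Idx (n + 2)) :=
    {Idx.of (n + 1) 0 (by omega), Idx.of (n + 1) 1 (by omega), Idx.of (n + 2) 0 (by omega)}
  have hs : ∀ β : Idx (n + 2), β ∉ s → (β.1.1 : ℕ) < n + 1 := by
    intro β hβ
    by_contra hle
    have := β.2.2
    simp only [s, Finset.mem_insert, Finset.mem_singleton, not_or] at hβ
    have hfst : (β.1.1 : ℕ) = n + 1 := by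
      by_contra hne
      exact hβ.2.2 (Idx.eq_of _ (by omega) (by omega))
    have hsnd : (β.1.2 : ℕ) = 1 := by
      by_contra hne
      exact hβ.1 (Idx.eq_of _ hfst (by omega))
    exact hβ.2.1 (Idx.eq_of _ hfst hsnd)
  rw [coeff_taylor_phasePoly, ← Finset.sum_subset (Finset.subset_univ s) fun β _ hβ => by
    simp [Nat.choose_eq_zero_of_lt (hs β hβ)]]
  rw [Finset.sum_insert (by simp [Idx.ext_iff]), Finset.sum_insert (by simp [Idx.ext_iff]),
    Finset.sum_singleton]
  simp only [Idx.fst_of, Idx.snd_of, Nat.choose_self, Nat.cast_one, monomial_zero_left, one_mul,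
    tsub_self, pow_zero, mul_one, Nat.choose_succ_self_right, Nat.cast_add, Nat.reduceSubDiff,
    add_tsub_cancel_left, pow_one, C_mul_X_eq_monomial, map_mul, map_add, map_natCast, map_ofNat C]
  ring

theorem coeff_coeff_taylor_phasePoly (x : Idx k → ℝ) (ℓ : ℝ[X]) (β : Idx k) :
    ((taylor ℓ (phasePoly x)).coeff β.1.1).coeff β.1.2 =
      x β + ∑ γ : Idx k with (β.1.1 : ℕ) < γ.1.1, (((γ.1.1 : ℕ).choose β.1.1 : ℝ[X]) *
        monomial γ.1.2 (x γ) * ℓ ^ ((γ.1.1 : ℕ) - β.1.1)).coeff β.1.2 := by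
  classical
  have hx : x β = ∑ γ : Idx k, if γ = β then x γ else 0 := by simp
  rw [hx, Finset.sum_filter, ← Finset.sum_add_distrib, coeff_taylor_phasePoly, finsetSum_coeff]
  refine Finset.sum_congr rfl fun γ _ => ?_
  rcases lt_trichotomy (γ.1.1 : ℕ) β.1.1 with h | h | h
  · have hne : γ ≠ β := by rintro rfl; exact h.false
    simp [Nat.choose_eq_zero_of_lt h, h.not_gt, hne]
  · have heq : γ = β ↔ (γ.1.2 : ℕ) = β.1.2 := by rw [Idx.ext_iff, and_iff_right h]
    rw [if_neg h.not_gt, add_zero, h, Nat.choose_self, Nat.sub_self]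
    simp [coeff_monomial, heq]
  · have hne : γ ≠ β := by rintro rfl; exact h.false
    simp [h, hne]

end StripPolynomial

section StripShear

variable {n : ℕ}

/-- The line `ξ₁ = ℓ(ξ₂)` about which `P(ξ; x)` has no term of degree `k - 1` in `ξ₁ - ℓ(ξ₂)`. -/
def stripLine (x : Idx (n + 2) → ℝ) : ℝ[X] :=
  C (-x (Idx.of (n + 1) 1 (by omega)) / ((n + 2) * x (Idx.of (n + 2) 0 (by omega)))) * X +
    C (-x (Idx.of (n + 1) 0 (by omega)) / ((n + 2) * x (Idx.of (n + 2) 0 (by omega))))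

theorem coeff_taylor_stripLine_phasePoly {x : Idx (n + 2) → ℝ}
    (hx : x (Idx.of (n + 2) 0 (by omega)) ≠ 0) :
    (taylor (stripLine x) (phasePoly x)).coeff (n + 1) = 0 := by
  have hn : (n + 2 : ℝ) ≠ 0 := by positivity
  rw [coeff_taylor_phasePoly_subtop, stripLine, mul_add, ← mul_assoc, ← C_mul, ← C_mul,
    mul_div_cancel₀ _ (mul_ne_zero hn hx), mul_div_cancel₀ _ (mul_ne_zero hn hx), C_neg, C_neg]
  ring

theorem measurable_coeff_pow {Ω : Type*} [MeasurableSpace Ω] {p : Ω → ℝ[X]}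
    (hp : ∀ j, Measurable fun ω => (p ω).coeff j) (m j : ℕ) :
    Measurable fun ω => (p ω ^ m).coeff j := by
  induction m generalizing j with
  | zero => simp
  | succ m ih =>
    simp only [pow_succ, coeff_mul]
    exact Finset.measurable_sum _ fun i _ => (ih i.1).mul (hp i.2)

theorem measurable_coeff_stripLine (j : ℕ) :
    Measurable fun x : Idx (n + 2) → ℝ => (stripLine x).coeff j := by
  simp only [stripLine, coeff_add, coeff_C_mul, coeff_C]
  split_ifs <;> fun_prop

/-- The change of variables replacing each `x β`, `β₁ < k - 1`, by the coefficient of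
`(ξ₁ - ℓ(ξ₂)) ^ β₁ * ξ₂ ^ β₂` in `P(ξ; x)`, where `ℓ = stripLine x`. -/
def stripShear (x : Idx (n + 2) → ℝ) (β : Idx (n + 2)) : ℝ :=
  if (β.1.1 : ℕ) ≤ n then ((taylor (stripLine x) (phasePoly x)).coeff β.1.1).coeff β.1.2 else x β

theorem measurePreserving_stripShear : MeasurePreserving (stripShear (n := n)) := by
  let g : Idx (n + 2) → (Idx (n + 2) → ℝ) → ℝ := fun β x =>
    if (β.1.1 : ℕ) ≤ n then
      ∑ γ : Idx (n + 2) with (β.1.1 : ℕ) < γ.1.1,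
        (((γ.1.1 : ℕ).choose β.1.1 : ℝ[X]) * monomial γ.1.2 (x γ) *
          stripLine x ^ ((γ.1.1 : ℕ) - β.1.1)).coeff β.1.2
    else 0
  have hg : stripShear (n := n) = fun x β => x β + g β x := by
    funext x β
    simp only [stripShear, g, coeff_coeff_taylor_phasePoly]
    split_ifs <;> simp
  rw [hg]
  refine measurePreserving_add_of_triangular (fun _ => volume) (fun β => (β.1.1 : ℕ))
    (fun β => ?_) fun β x y hxy => ?_
  · simp only [g]
    split_ifs
    · refine Finset.measurable_sum _ fun γ _ => ?_
      simp only [mul_assoc, coeff_natCast_mul]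
      simp only [coeff_mul, coeff_monomial]
      refine (Finset.measurable_sum _ fun i _ => ?_).const_mul _
      refine Measurable.mul ?_ (measurable_coeff_pow measurable_coeff_stripLine _ _)
      split_ifs <;> fun_prop
    · exact measurable_const
  · have hline : (β.1.1 : ℕ) ≤ n → stripLine x = stripLine y := fun hβ => by
      have hlt : ∀ i l h, n < i → x (Idx.of i l h) = y (Idx.of i l h) := fun i l h hi =>
        hxy _ (hβ.trans_lt hi)
      simp only [stripLine, hlt _ _ _ (Nat.lt_succ_self n), hlt (n + 2) _ _ (by omega)]
    simp only [g]
    split_ifs with hβ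
    · refine Finset.sum_congr rfl fun γ hγ => ?_
      rw [hline hβ, hxy γ (Finset.mem_filter.1 hγ).2]
    · rfl

end StripShear

section ExponentialIntegral

theorem setIntegral_Icc_finTwo {E : Type*} [NormedAddCommGroup E] [NormedSpace ℝ E]
    {f : (Fin 2 → ℝ) → E} (hf : Continuous f) :
    ∫ ξ in Icc (0 : Fin 2 → ℝ) 1, f ξ = ∫ v in (0 : ℝ)..1, ∫ y in (0 : ℝ)..1, f ![y, v] := by
  have hpre : Icc (0 : Fin 2 → ℝ) 1 =
      MeasurableEquiv.finTwoArrow ⁻¹' (Icc (0 : ℝ) 1 ×ˢ Icc (0 : ℝ) 1) := by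
    ext ξ
    simp [MeasurableEquiv.finTwoArrow, Pi.le_def, Fin.forall_fin_two]
  have hf_eq : f = (fun p : ℝ × ℝ => f ![p.1, p.2]) ∘ MeasurableEquiv.finTwoArrow := by
    funext ξ
    exact congrArg f (FinVec.etaExpand_eq ξ).symm
  have hswap : Continuous fun p : ℝ × ℝ => f ![p.2, p.1] := by fun_prop
  calc ∫ ξ in Icc (0 : Fin 2 → ℝ) 1, f ξ
      = ∫ p in Icc (0 : ℝ) 1 ×ˢ Icc (0 : ℝ) 1, f ![p.1, p.2] := by
        rw [hpre, hf_eq]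
        exact (volume_preserving_finTwoArrow ℝ).setIntegral_preimage_emb
          (MeasurableEquiv.measurableEmbedding _) (fun p : ℝ × ℝ => f ![p.1, p.2]) _
    _ = ∫ p in Icc (0 : ℝ) 1 ×ˢ Icc (0 : ℝ) 1, f ![p.2, p.1] := by
        rw [Measure.volume_eq_prod, ← setIntegral_prod_swap]
        rfl
    _ = ∫ v in Icc (0 : ℝ) 1, ∫ y in Icc (0 : ℝ) 1, f ![y, v] :=
        setIntegral_prod _ (hswap.continuousOn.integrableOn_compact
          (isCompact_Icc.prod isCompact_Icc))
    _ = ∫ v in (0 : ℝ)..1, ∫ y in (0 : ℝ)..1, f ![y, v] := by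
        simp only [intervalIntegral.integral_of_le zero_le_one, ← integral_Icc_eq_integral_Ioc]

theorem integral_cos_sub_le_norm_integral_exp {α : Type*} [MeasurableSpace α] {μ : Measure α}
    {f : α → ℝ} (hf : Integrable (fun a => Complex.exp (2 * π * Complex.I * f a)) μ) (c : ℝ) :
    ∫ a, cos (2 * π * (f a - c)) ∂μ ≤ ‖∫ a, Complex.exp (2 * π * Complex.I * f a) ∂μ‖ := by
  let z : ℂ := Complex.exp ((-(2 * π * c) : ℝ) * Complex.I)
  have hre : ∀ a, cos (2 * π * (f a - c)) = (z * Complex.exp (2 * π * Complex.I * f a)).re :=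
    fun a => by
      rw [← Complex.exp_ofReal_mul_I_re, ← Complex.exp_add]
      push_cast
      ring_nf
  calc ∫ a, cos (2 * π * (f a - c)) ∂μ
      = (z * ∫ a, Complex.exp (2 * π * Complex.I * f a) ∂μ).re := by
        simp only [hre, ← integral_const_mul]
        exact integral_re (hf.const_mul z)
    _ ≤ ‖z * ∫ a, Complex.exp (2 * π * Complex.I * f a) ∂μ‖ := Complex.re_le_norm _
    _ = ‖∫ a, Complex.exp (2 * π * Complex.I * f a) ∂μ‖ := by
        rw [norm_mul, Complex.norm_exp_ofReal_mul_I, one_mul]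

theorem le_norm_Eone_of_forall_slice {k : ℕ} {x : Idx k → ℝ} {b c : ℝ}
    (h : ∀ v ∈ Icc (0 : ℝ) 1, b ≤ ∫ y in (0 : ℝ)..1, cos (2 * π * (Pphase k x ![y, v] - c))) :
    b ≤ ‖Eone k x‖ := by
  have hP : Continuous (Pphase k x) := by unfold Pphase; fun_prop
  have hcont : Continuous fun ξ => cos (2 * π * (Pphase k x ξ - c)) := by fun_prop
  have hexp : Continuous fun ξ => Complex.exp (2 * π * Complex.I * Pphase k x ξ) := by fun_prop
  have hslice : Continuous fun v : ℝ =>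
      ∫ y in (0 : ℝ)..1, cos (2 * π * (Pphase k x ![y, v] - c)) :=
    intervalIntegral.continuous_parametric_intervalIntegral_of_continuous' (by fun_prop) 0 1
  calc b = ∫ _v in (0 : ℝ)..1, b := by simp
    _ ≤ ∫ v in (0 : ℝ)..1, ∫ y in (0 : ℝ)..1, cos (2 * π * (Pphase k x ![y, v] - c)) :=
        intervalIntegral.integral_mono_on zero_le_one (by simp)
          (hslice.intervalIntegrable _ _) h
    _ = ∫ ξ in Icc (0 : Fin 2 → ℝ) 1, cos (2 * π * (Pphase k x ξ - c)) :=
        (setIntegral_Icc_finTwo hcont).symm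
    _ ≤ ‖Eone k x‖ := integral_cos_sub_le_norm_integral_exp
        (hexp.continuousOn.integrableOn_compact isCompact_Icc) c

theorem exists_le_integral_cos_eval_map_sub (n d : ℕ) :
    ∃ δ > 0, ∃ ε > 0, ∃ M ≥ (1 : ℝ), ∀ μ ≥ M, ∀ Q : ℝ[X][Y], Q.natDegree ≤ n + 2 →
      Q.coeff (n + 2) = C (μ ^ (n + 2)) → Q.coeff (n + 1) = 0 →
      (∀ j ≤ n, (Q.coeff j).natDegree ≤ d ∧ ∀ l, |(Q.coeff j).coeff l| ≤ ε * μ ^ j) →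
      ∀ v ∈ Icc (0 : ℝ) 1, ∀ w ∈ Icc (1 / 4 : ℝ) (3 / 4),
        δ / μ ≤ ∫ y in (0 : ℝ)..1, cos (2 * π * (Q.map (evalRingHom v)).eval (y - w)) := by
  obtain ⟨δ, hδ, ε, hε, M, hM, h⟩ := exists_le_integral_cos_sub_pow_add_eval n
  refine ⟨δ, hδ, ε / (d + 1), by positivity, M, hM,
    fun μ hμ Q hdeg htop hsubtop hlow v hv w hw => ?_⟩
  have hμ0 : 0 < μ := by linarith
  let q : ℝ[X] := Q.map (evalRingHom v) - monomial (n + 2) (μ ^ (n + 2))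
  have hq_coeff : ∀ j ≤ n, q.coeff j = (Q.coeff j).eval v := fun j hj => by
    simp [q, coeff_monomial, show n + 2 ≠ j by omega]
  have hq_coeff_zero : ∀ j, n < j → q.coeff j = 0 := fun j hj => by
    obtain rfl | rfl | hj' : j = n + 1 ∨ j = n + 2 ∨ n + 2 < j := by omega
    · simp [q, hsubtop, coeff_monomial]
    · simp [q, htop]
    · simp [q, coeff_eq_zero_of_natDegree_lt (hdeg.trans_lt hj'), coeff_monomial, hj'.ne]
  have hq_le : ∀ j, |q.coeff j| ≤ ε * μ ^ j := fun j => by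
    rcases le_or_gt j n with hj | hj
    · obtain ⟨hdegj, hcoeffj⟩ := hlow j hj
      calc |q.coeff j| ≤ (d + 1) * (ε / (d + 1) * μ ^ j) * 1 ^ d := by
            rw [hq_coeff j hj]
            exact abs_eval_le_mul_pow hdegj hcoeffj le_rfl (by rw [abs_of_nonneg hv.1]; exact hv.2)
        _ = ε * μ ^ j := by rw [one_pow]; field_simp
    · rw [hq_coeff_zero j hj, abs_zero]
      positivity
  refine (h μ hμ w hw q (natDegree_le_iff_coeff_eq_zero.2 hq_coeff_zero) hq_le).trans_eq
    (intervalIntegral.integral_congr fun y _ => ?_)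
  simp [q]

theorem abs_coeff_coeff_sub_constantCoeff_le {k m : ℕ} {Q : ℝ[X][Y]} {b : ℕ → ℝ} (hm : m ≤ k)
    (hdeg : ∀ j, (Q.coeff j).natDegree ≤ k - j) (hb : ∀ j, 0 ≤ b j)
    (hQ : ∀ β : Idx k, (β.1.1 : ℕ) ≤ m → |(Q.coeff β.1.1).coeff β.1.2| ≤ b β.1.1)
    {j : ℕ} (hj : j ≤ m) (l : ℕ) :
    |((Q - C (C ((Q.coeff 0).coeff 0))).coeff j).coeff l| ≤ b j := by
  have hcoeff : ((Q - C (C ((Q.coeff 0).coeff 0))).coeff j).coeff l =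
      if j = 0 ∧ l = 0 then 0 else (Q.coeff j).coeff l := by
    by_cases hj0 : j = 0
    · by_cases hl0 : l = 0 <;> simp [hj0, hl0, coeff_C]
    · simp [hj0, coeff_C]
  rw [hcoeff]
  split_ifs with h0
  · rw [abs_zero]
    exact hb j
  rcases lt_or_ge k (j + l) with hjl | hjl
  · rw [coeff_eq_zero_of_natDegree_lt ((hdeg j).trans_lt (by omega)), abs_zero]
    exact hb j
  · exact hQ (Idx.of j l ⟨by omega, hjl⟩) hj

theorem exists_le_norm_Eone (n : ℕ) :
    ∃ δ > 0, ∃ ε > 0, ∃ M ≥ (1 : ℝ), ∀ μ ≥ M, ∀ (x : Idx (n + 2) → ℝ) (ℓ : ℝ[X]),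
      ℓ.natDegree ≤ 1 → (∀ v ∈ Icc (0 : ℝ) 1, ℓ.eval v ∈ Icc (1 / 4 : ℝ) (3 / 4)) →
      x (Idx.of (n + 2) 0 (by omega)) = μ ^ (n + 2) →
      (taylor ℓ (phasePoly x)).coeff (n + 1) = 0 →
      (∀ β : Idx (n + 2), (β.1.1 : ℕ) ≤ n →
        |((taylor ℓ (phasePoly x)).coeff β.1.1).coeff β.1.2| ≤ ε * μ ^ (β.1.1 : ℕ)) →
      δ / μ ≤ ‖Eone (n + 2) x‖ := by
  obtain ⟨δ, hδ, ε, hε, M, hM, h⟩ := exists_le_integral_cos_eval_map_sub n (n + 2)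
  refine ⟨δ, hδ, ε, hε, M, hM, fun μ hμ x ℓ hℓ hstrip htop hsubtop hlow => ?_⟩
  have hμ0 : 0 < μ := by linarith
  let T : ℝ[X][Y] := taylor ℓ (phasePoly x)
  let c : ℝ := (T.coeff 0).coeff 0
  have hT_natDegree : T.natDegree ≤ n + 2 :=
    (natDegree_taylor _ _).trans_le (natDegree_phasePoly_le x)
  have hcoeff : ∀ j ≠ 0, (T - C (C c)).coeff j = T.coeff j := fun j hj => by
    rw [coeff_sub, coeff_C_of_ne_zero hj, sub_zero]
  have hcoeff_natDegree : ∀ j, ((T - C (C c)).coeff j).natDegree ≤ n + 2 := fun j => by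
    rw [coeff_sub, coeff_C]
    have : (T.coeff j).natDegree ≤ n + 2 - j := natDegree_coeff_taylor_phasePoly_le x hℓ j
    split_ifs
    · rw [natDegree_sub_C]
      omega
    · rw [sub_zero]
      omega
  refine le_norm_Eone_of_forall_slice (c := c) fun v hv => ?_
  refine (h μ hμ (T - C (C c)) ?_ ?_ ?_ (fun j hj => ⟨hcoeff_natDegree j, fun l => ?_⟩) v hv _
    (hstrip v hv)).trans_eq (intervalIntegral.integral_congr fun y _ => ?_)
  · rwa [natDegree_sub_C]
  · rw [hcoeff _ (by omega), coeff_taylor_phasePoly_top, htop]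
  · rw [hcoeff _ (by omega), hsubtop]
  · exact abs_coeff_coeff_sub_constantCoeff_le (b := fun j => ε * μ ^ j) (by omega)
      (natDegree_coeff_taylor_phasePoly_le x hℓ) (fun j => by positivity) hlow hj l
  · simp [Pphase_eq_eval_taylor x ℓ, T]

end ExponentialIntegral

section StripRegion

variable {n : ℕ}

theorem sum_Idx_fst {M : Type*} [AddCommMonoid M] (k : ℕ) {F : ℕ → M} (hF : F 0 = 0) :
    ∑ β : Idx k, F β.1.1 = ∑ i ∈ Finset.range (k + 1), (k + 1 - i) • F i := by
  have hsigma : ∑ i ∈ Finset.range (k + 1), (k + 1 - i) • F i =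
      ∑ p ∈ (Finset.range (k + 1)).sigma fun i => Finset.range (k + 1 - i), F p.1 := by
    simp [Finset.sum_sigma]
  rw [hsigma]
  refine Finset.sum_of_injOn (fun β => ⟨β.1.1, β.1.2⟩) (fun β _ γ _ hβγ => ?_) (fun β _ => ?_)
    (fun p hp hpβ => ?_) fun β _ => rfl
  · simpa [Idx.ext_iff] using hβγ
  · have := β.2.2
    simp only [Finset.coe_sigma, mem_sigma_iff, Finset.mem_coe, Finset.mem_range]
    omega
  · obtain ⟨i, l⟩ := p
    simp only [Finset.mem_sigma, Finset.mem_range] at hp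
    rcases Nat.eq_zero_or_pos i with rfl | hi
    · exact hF
    · exact absurd ⟨Idx.of i l (by omega), by simp⟩ hpβ

theorem sum_range_mul_sub (m : ℕ) (K : ℝ) :
    ∑ i ∈ Finset.range m, i * (K - i) = m * (m - 1) * (3 * K - 2 * m + 1) / 6 := by
  induction m with
  | zero => simp
  | succ m ih =>
    rw [Finset.sum_range_succ, ih]
    push_cast
    ring

/-- The power of `r` to which the length of the `β`-th side of the box of scale `r` is
proportional. -/
def boxExponent (β : Idx (n + 2)) : ℕ :=
  if (β.1.1 : ℕ) ≤ n then β.1.1 else n + 2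

theorem sum_boxExponent (n : ℕ) :
    ((∑ β : Idx (n + 2), boxExponent β : ℕ) : ℝ) =
      ((n + 2 : ℕ) : ℝ) * ((n + 2 : ℕ) + 1) * ((n + 2 : ℕ) + 2) / 6 + 2 := by
  have hlow : ∑ i ∈ Finset.range (n + 1), ((n + 2 + 1 - i) • if i ≤ n then i else n + 2 : ℕ) =
      ∑ i ∈ Finset.range (n + 1), (i : ℝ) * ((n + 3) - i) := by
    push_cast
    refine Finset.sum_congr rfl fun i hi => ?_
    have hi := Finset.mem_range.1 hi
    rw [if_pos (by omega), smul_eq_mul, Nat.cast_mul, Nat.cast_sub (by omega)]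
    push_cast
    ring
  have h := sum_Idx_fst (n + 2) (F := fun i => if i ≤ n then i else n + 2) (by simp)
  simp only [boxExponent, h, Finset.sum_range_succ _ (n + 2), Finset.sum_range_succ _ (n + 1)]
  rw [Nat.cast_add, Nat.cast_add, hlow, sum_range_mul_sub]
  simp only [Nat.cast_add, Nat.cast_one, add_sub_cancel_right, Nat.reduceSubDiff,
    add_tsub_cancel_left, add_le_iff_nonpos_right, nonpos_iff_eq_zero, one_ne_zero, ↓reduceIte,
    smul_eq_mul, Nat.cast_mul, Nat.cast_ofNat, OfNat.ofNat_ne_zero, one_mul]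
  ring

/-- The `β`-th side of the box of scale `1`; `ε` bounds the coefficients of the terms of degree
less than `k - 1` in `ξ₁ - ℓ(ξ₂)`. -/
def boxSide (ε : ℝ) (β : Idx (n + 2)) : ℝ × ℝ :=
  if (β.1.1 : ℕ) ≤ n then (-ε, ε)
  else if (β.1.1 : ℕ) = n + 2 then (1, 3 / 2)
  else if (β.1.2 : ℕ) = 0 then (-(n + 2) / 2, -(3 * (n + 2)) / 8)
  else (-(n + 2) / 4, 0)

theorem boxSide_fst_lt_snd {ε : ℝ} (hε : 0 < ε) (β : Idx (n + 2)) :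
    (boxSide ε β).1 < (boxSide ε β).2 := by
  have := n.cast_nonneg (α := ℝ)
  unfold boxSide
  split_ifs <;> dsimp only <;> linarith

/-- The region of scale `r` on which `‖Eone (n + 2) x‖` is at least a constant multiple of `1 / r`:
the preimage under `stripShear` of a box whose `β`-th side has length comparable to
`r ^ boxExponent β`. -/
def stripRegion (n : ℕ) (ε r : ℝ) : Set (Idx (n + 2) → ℝ) :=
  stripShear ⁻¹' univ.pi fun β =>
    Ico ((boxSide ε β).1 * r ^ boxExponent β) ((boxSide ε β).2 * r ^ boxExponent β)

theorem measurableSet_stripRegion (ε r : ℝ) : MeasurableSet (stripRegion n ε r) :=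
  measurePreserving_stripShear.measurable (MeasurableSet.univ_pi fun _ => measurableSet_Ico)

theorem volume_pi_Ico_mul_pow {ι : Type*} [Fintype ι] {a b : ι → ℝ} (hab : ∀ i, a i ≤ b i)
    {r : ℝ} (hr : 0 ≤ r) (e : ι → ℕ) :
    volume (univ.pi fun i => Ico (a i * r ^ e i) (b i * r ^ e i)) =
      ENNReal.ofReal ((∏ i, (b i - a i)) * r ^ ∑ i, e i) := by
  have hside : ∀ i, 0 ≤ (b i - a i) * r ^ e i := fun i =>
    mul_nonneg (sub_nonneg.2 (hab i)) (pow_nonneg hr _)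
  simp only [Real.volume_pi_Ico, ← sub_mul]
  rw [← ENNReal.ofReal_prod_of_nonneg fun i _ => hside i, Finset.prod_mul_distrib,
    Finset.prod_pow_eq_pow_sum]

theorem volume_stripRegion {ε r : ℝ} (hε : 0 < ε) (hr : 0 ≤ r) :
    volume (stripRegion n ε r) =
      ENNReal.ofReal ((∏ β : Idx (n + 2), ((boxSide ε β).2 - (boxSide ε β).1)) *
        r ^ ∑ β : Idx (n + 2), boxExponent β) := by
  rw [stripRegion, measurePreserving_stripShear.measure_preimage
    (MeasurableSet.univ_pi fun _ => measurableSet_Ico).nullMeasurableSet]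
  exact volume_pi_Ico_mul_pow (fun β => (boxSide_fst_lt_snd hε β).le) hr boxExponent

variable {ε r : ℝ} {x : Idx (n + 2) → ℝ}

theorem apply_top_mem_of_mem_stripRegion (hx : x ∈ stripRegion n ε r) :
    x (Idx.of (n + 2) 0 (by omega)) ∈ Ico (r ^ (n + 2)) (3 / 2 * r ^ (n + 2)) := by
  simpa [stripShear, boxSide, boxExponent] using hx (Idx.of (n + 2) 0 (by omega)) (mem_univ _)

theorem abs_coeff_le_of_mem_stripRegion (hx : x ∈ stripRegion n ε r) {β : Idx (n + 2)}
    (hβ : (β.1.1 : ℕ) ≤ n) :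
    |((taylor (stripLine x) (phasePoly x)).coeff β.1.1).coeff β.1.2| ≤ ε * r ^ (β.1.1 : ℕ) := by
  have hmem := hx β (mem_univ _)
  simp only [stripShear, boxSide, boxExponent, if_pos hβ, neg_mul] at hmem
  exact abs_le.2 ⟨hmem.1, hmem.2.le⟩

theorem eval_stripLine_mem_of_mem_stripRegion (hr : 0 < r) (hx : x ∈ stripRegion n ε r) {v : ℝ}
    (hv : v ∈ Icc (0 : ℝ) 1) : (stripLine x).eval v ∈ Icc (1 / 4 : ℝ) (3 / 4) := by
  obtain ⟨htop, htop'⟩ := apply_top_mem_of_mem_stripRegion hx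
  have hoffset : x (Idx.of (n + 1) 0 (by omega)) ∈
      Ico (-(n + 2) / 2 * r ^ (n + 2)) (-(3 * (n + 2)) / 8 * r ^ (n + 2)) := by
    simpa [stripShear, boxSide, boxExponent] using hx (Idx.of (n + 1) 0 (by omega)) (mem_univ _)
  have hslope : x (Idx.of (n + 1) 1 (by omega)) ∈ Ico (-(n + 2) / 4 * r ^ (n + 2)) 0 := by
    simpa [stripShear, boxSide, boxExponent] using hx (Idx.of (n + 1) 1 (by omega)) (mem_univ _)
  have : 0 < r ^ (n + 2) := by positivity
  have hden : (n + 2) * r ^ (n + 2) ≤ (n + 2) * x (Idx.of (n + 2) 0 (by omega)) := by gcongr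
  have hden' : (n + 2) * x (Idx.of (n + 2) 0 (by omega)) ≤ (n + 2) * (3 / 2 * r ^ (n + 2)) := by
    gcongr
  have hden0 : 0 < (n + 2) * x (Idx.of (n + 2) 0 (by omega)) := hden.trans_lt' (by positivity)
  simp only [stripLine, eval_add, eval_mul, eval_C, eval_X]
  rw [div_mul_eq_mul_div, ← add_div, mem_Icc, le_div_iff₀ hden0, div_le_iff₀ hden0]
  constructor <;> nlinarith [hv.1, hv.2, hoffset.1, hoffset.2, hslope.1, hslope.2]

theorem disjoint_stripRegion {r' : ℝ} (hr : 0 ≤ r) (h : 2 * r ≤ r') :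
    Disjoint (stripRegion n ε r) (stripRegion n ε r') := by
  refine Set.disjoint_left.2 fun x hx hx' => ?_
  have hle : 3 / 2 * r ^ (n + 2) ≤ r' ^ (n + 2) :=
    calc 3 / 2 * r ^ (n + 2) ≤ 2 ^ (n + 2) * r ^ (n + 2) := by
          gcongr
          exact le_trans (by norm_num) (le_self_pow₀ one_le_two (by omega : n + 2 ≠ 0))
      _ = (2 * r) ^ (n + 2) := (mul_pow _ _ _).symm
      _ ≤ r' ^ (n + 2) := by gcongr
  linarith [(apply_top_mem_of_mem_stripRegion hx).2, (apply_top_mem_of_mem_stripRegion hx').1]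

theorem exists_le_norm_Eone_of_mem_stripRegion (n : ℕ) :
    ∃ δ > 0, ∃ ε > 0, ∃ M ≥ (1 : ℝ), ∀ r ≥ M, ∀ x ∈ stripRegion n ε r,
      δ / r ≤ ‖Eone (n + 2) x‖ := by
  obtain ⟨δ, hδ, ε, hε, M, hM, h⟩ := exists_le_norm_Eone n
  refine ⟨δ / (3 / 2), by positivity, ε, hε, M, hM, fun r hr x hx => ?_⟩
  have hr0 : 0 < r := by linarith
  obtain ⟨htop, htop'⟩ := apply_top_mem_of_mem_stripRegion hx
  have htop0 : 0 < x (Idx.of (n + 2) 0 (by omega)) := htop.trans_lt' (by positivity)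
  obtain ⟨μ, hμ0, hμ⟩ : ∃ μ, 0 < μ ∧ x (Idx.of (n + 2) 0 (by omega)) = μ ^ (n + 2) :=
    ⟨_, rpow_pos_of_pos htop0 _, (rpow_inv_natCast_pow htop0.le (by omega)).symm⟩
  have hrμ : r ≤ μ := le_of_pow_le_pow_left₀ (by omega) hμ0.le (htop.trans_eq hμ)
  have hμr : μ ≤ 3 / 2 * r := by
    refine le_of_pow_le_pow_left₀ (by omega : n + 2 ≠ 0) (by positivity) ?_
    calc μ ^ (n + 2) ≤ 3 / 2 * r ^ (n + 2) := hμ.symm.trans_le htop'.le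
      _ ≤ (3 / 2) ^ (n + 2) * r ^ (n + 2) := by
        gcongr
        exact le_self_pow₀ (by norm_num) (by omega)
      _ = (3 / 2 * r) ^ (n + 2) := (mul_pow _ _ _).symm
  calc δ / (3 / 2) / r = δ / (3 / 2 * r) := div_div _ _ _
    _ ≤ δ / μ := by gcongr
    _ ≤ ‖Eone (n + 2) x‖ := h μ (hr.trans hrμ) x (stripLine x) natDegree_linear_le
      (fun v hv => eval_stripLine_mem_of_mem_stripRegion hr0 hx hv) hμ
      (coeff_taylor_stripLine_phasePoly htop0.ne') fun β hβ =>
        (abs_coeff_le_of_mem_stripRegion hx hβ).trans (by gcongr)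

end StripRegion

section Divergence

theorem lintegral_eq_top_of_pairwise_disjoint {α : Type*} [MeasurableSpace α] {μ : Measure α}
    {f : α → ℝ≥0∞} {G : ℕ → Set α} {c : ℝ≥0∞} (hG : ∀ m, MeasurableSet (G m))
    (hdisj : Pairwise (Function.onFun Disjoint G)) (hc : c ≠ 0)
    (hle : ∀ m, c ≤ ∫⁻ a in G m, f a ∂μ) : ∫⁻ a, f a ∂μ = ⊤ := by
  refine top_unique ?_
  calc ⊤ = ∑' _ : ℕ, c := (ENNReal.tsum_const_eq_top_of_ne_zero hc).symm
    _ ≤ ∑' m, ∫⁻ a in G m, f a ∂μ := ENNReal.tsum_le_tsum hle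
    _ = ∫⁻ a in ⋃ m, G m, f a ∂μ := (lintegral_iUnion hG hdisj _).symm
    _ ≤ ∫⁻ a, f a ∂μ := setLIntegral_le_lintegral _ _

theorem exists_le_setLIntegral_stripRegion {n : ℕ} {p : ℝ} (hp : 0 ≤ p)
    (hpe : p ≤ (∑ β : Idx (n + 2), boxExponent β : ℕ)) :
    ∃ c ≠ 0, ∃ ε, ∃ M ≥ (1 : ℝ), ∀ r ≥ M,
      c ≤ ∫⁻ x in stripRegion n ε r, ENNReal.ofReal (‖Eone (n + 2) x‖ ^ p) := by
  obtain ⟨δ, hδ, ε, hε, M, hM, h⟩ := exists_le_norm_Eone_of_mem_stripRegion n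
  let e : ℕ := ∑ β : Idx (n + 2), boxExponent β
  let V : ℝ := ∏ β : Idx (n + 2), ((boxSide ε β).2 - (boxSide ε β).1)
  have hV : 0 < V := Finset.prod_pos fun β _ => sub_pos.2 (boxSide_fst_lt_snd hε β)
  refine ⟨ENNReal.ofReal (δ ^ e * V), (ENNReal.ofReal_pos.2 (by positivity)).ne', ε, max M δ,
    hM.le.trans (le_max_left _ _), fun r hr => ?_⟩
  obtain ⟨hMr, hδr⟩ := max_le_iff.1 hr
  have hr0 : 0 < r := by linarith
  have hpow : ∀ x ∈ stripRegion n ε r, (δ / r) ^ e ≤ ‖Eone (n + 2) x‖ ^ p := fun x hx =>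
    calc (δ / r) ^ e = (δ / r) ^ (e : ℝ) := (rpow_natCast _ _).symm
      _ ≤ (δ / r) ^ p :=
        rpow_le_rpow_of_exponent_ge (by positivity) ((div_le_one hr0).2 hδr) hpe
      _ ≤ ‖Eone (n + 2) x‖ ^ p := by gcongr; exact h r hMr x hx
  calc ENNReal.ofReal (δ ^ e * V) = ENNReal.ofReal ((δ / r) ^ e) * volume (stripRegion n ε r) := by
        rw [volume_stripRegion hε hr0.le, ← ENNReal.ofReal_mul (by positivity), mul_left_comm,
          ← mul_pow, div_mul_cancel₀ _ hr0.ne', mul_comm]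
    _ = ∫⁻ _ in stripRegion n ε r, ENNReal.ofReal ((δ / r) ^ e) := (setLIntegral_const _ _).symm
    _ ≤ ∫⁻ x in stripRegion n ε r, ENNReal.ofReal (‖Eone (n + 2) x‖ ^ p) :=
        setLIntegral_mono' (measurableSet_stripRegion ε r) fun x hx =>
          ENNReal.ofReal_le_ofReal (hpow x hx)

/-- Lower bound part of Theorem 1.2: for every `k ≥ 2` and every real `p` with
`0 < p ≤ q_k`, where `q_k = k(k+1)(k+2)/6 + 2`, the integral
`∫_{ℝ^N} |E_k1(x)|^p dx` is infinite. -/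
theorem tarry_lower_bound (k : ℕ) (hk : 2 ≤ k) :
    ∀ p : ℝ, 0 < p → p ≤ (k : ℝ) * (k + 1) * (k + 2) / 6 + 2 →
      (∫⁻ x : Idx k → ℝ, ENNReal.ofReal (‖Eone k x‖ ^ p)) = ⊤ := by
  intro p hp hpq
  obtain ⟨n, rfl⟩ := Nat.exists_eq_add_of_le' hk
  rw [← sum_boxExponent] at hpq
  obtain ⟨c, hc, ε, M, hM, hle⟩ := exists_le_setLIntegral_stripRegion hp.le hpq
  have hM0 : 0 < M := by linarith
  have hscale : ∀ m : ℕ, M ≤ M * 2 ^ m := fun m =>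
    le_mul_of_one_le_right hM0.le (one_le_pow₀ one_le_two)
  have hdisj : Pairwise (Function.onFun Disjoint fun m : ℕ => stripRegion n ε (M * 2 ^ m)) := by
    refine (pairwise_disjoint_on _).2 fun i j hij => disjoint_stripRegion (by positivity) ?_
    calc 2 * (M * 2 ^ i) = M * 2 ^ (i + 1) := by ring
      _ ≤ M * 2 ^ j := by gcongr; exacts [one_le_two, hij]
  exact lintegral_eq_top_of_pairwise_disjoint (fun m => measurableSet_stripRegion ε _) hdisj hc
    fun m => hle _ (hscale m)

end Divergence
end
end

section
/- For every integer k ≥ 2 such that q_k is even, and for every real p with 0 < p ≤ q_k, the Fourier extension estimate fails at exponent p: there is no finite constant C such that ‖E_k f‖_{L^p(ℝ^N)} ≤ C · ‖f‖_{L^∞([0,1]²)} holds for every f ∈ L^∞([0,1]²); indeed the constant function f ≡ 1 satisfies ‖f‖_{L^∞} = 1 while ∫_{ℝ^N} |E_k f(x)|^p dx = ∞. -/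
open MeasureTheory Real Set
open scoped ENNReal

noncomputable section

/-- The Fourier extension operator `E_k f(x) = ∫_{[0,1]²} f(ξ) e(P(ξ; x)) dξ`. -/
def Eext (k : ℕ) (f : (Fin 2 → ℝ) → ℂ) (x : Idx k → ℝ) : ℂ :=
  ∫ ξ in Icc (0 : Fin 2 → ℝ) 1, f ξ * Complex.exp (2 * Real.pi * Complex.I * (Pphase k x ξ))

/-
The power `(E_k 1) ^ s` is the Fourier–Stieltjes transform of the law `ν` of the sum of `s` moment
vectors of random points of the unit square. By Plancherel its `L²` norm counts the pairs of
`ν`-points that are close together, so by Cauchy–Schwarz disjoint pieces of `ν` of mass `m` inside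
boxes of volume `V` each contribute about `m² / V`. At scale `δ` there are about `δ⁻²` lines, and
the tuples of points within `δ` of a given line have mass about `δ ^ s`. A unimodular shear maps
their moment sums into a box with sides `δ ^ β₁`, of volume about `δ ^ D` with
`D = ∑ β₁ = k (k + 1) (k + 2) / 6`. Thus all lines together contribute about `δ ^ (2 s - D - 2)`,
which stays bounded below when `2 s ≤ D + 2`; infinitely many well-separated scales give `∞`.
-/

open scoped FourierTransform Topology

theorem tsum_sq_le_sq_tsum {κ : Type*} (a : κ → ℝ≥0∞) : ∑' m, a m ^ 2 ≤ (∑' m, a m) ^ 2 :=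
  calc
    _ = ∑' m, a m * a m := by simp only [sq]
    _ ≤ ∑' m, a m * ∑' m, a m := by
      gcongr with m
      exact ENNReal.le_tsum m
    _ = _ := by rw [ENNReal.tsum_mul_right, sq]

theorem sq_lintegral_le_measure_mul_lintegral_sq {Y : Type*} [MeasurableSpace Y] {m : Measure Y}
    {f : Y → ℝ≥0∞} (hf : AEMeasurable f m) {B : Set Y} (hB : MeasurableSet B)
    (hfB : ∀ y ∉ B, f y = 0) :
    (∫⁻ y, f y ∂m) ^ 2 ≤ m B * ∫⁻ y, f y ^ 2 ∂m := by
  have hmul (y : Y) : (f * B.indicator (1 : Y → ℝ≥0∞)) y = f y := by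
    by_cases hy : y ∈ B <;> simp [hy, hfB]
  have hsq (y : Y) : B.indicator (1 : Y → ℝ≥0∞) y ^ (2 : ℝ) = B.indicator 1 y := by
    by_cases hy : y ∈ B <;> simp [hy]
  have hholder := ENNReal.lintegral_mul_le_Lp_mul_Lq m Real.HolderConjugate.two_two hf
    ((measurable_one (α := ℝ≥0∞)).indicator hB).aemeasurable
  simp only [hmul, hsq, lintegral_indicator_one hB, ENNReal.rpow_two] at hholder
  refine (pow_le_pow_left₀ zero_le hholder 2).trans_eq ?_
  rw [mul_pow, ← ENNReal.rpow_two, ← ENNReal.rpow_two, ← ENNReal.rpow_mul, ← ENNReal.rpow_mul]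
  norm_num [mul_comm]

theorem measurableSet_dist_le {X : Type*} [PseudoMetricSpace X] [SecondCountableTopology X]
    [MeasurableSpace X] [OpensMeasurableSpace X] (ρ : ℝ) :
    MeasurableSet {p : X × X | dist p.1 p.2 ≤ ρ} :=
  measurableSet_le measurable_dist measurable_const

theorem measurable_measure_closedBall {X : Type*} [PseudoMetricSpace X]
    [SecondCountableTopology X] [MeasurableSpace X] [OpensMeasurableSpace X] (μ : Measure X)
    [SFinite μ] (ρ : ℝ) : Measurable fun y => μ (Metric.closedBall y ρ) :=
  measurable_measure_prodMk_right (measurableSet_dist_le ρ)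

section ClosedBall

variable {ι : Type*} [Fintype ι] (ν : Measure (ι → ℝ)) [SFinite ν]

/-- Both sides count the pairs `(z, y)` with `dist z y ≤ ρ`. -/
theorem lintegral_measure_closedBall {ρ : ℝ} (hρ : 0 ≤ ρ) :
    ∫⁻ y, ν (Metric.closedBall y ρ) = ENNReal.ofReal ((2 * ρ) ^ Fintype.card ι) * ν univ := by
  have hmeas := measurableSet_dist_le (X := ι → ℝ) ρ
  calc
    _ = ν.prod volume {p | dist p.1 p.2 ≤ ρ} := (Measure.prod_apply_symm hmeas).symm
    _ = ∫⁻ z, volume (Metric.closedBall z ρ) ∂ν := by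
      rw [Measure.prod_apply hmeas]
      exact lintegral_congr fun z => congrArg _ <| Set.ext fun y => by
        rw [mem_preimage, mem_ofPred_eq, Metric.mem_closedBall']
    _ = _ := by simp only [Real.volume_pi_closedBall _ hρ, lintegral_const]

/-- The pairs on the right contain every pair of points lying in a common ball of radius `ρ`. -/
theorem lintegral_measure_closedBall_sq_le {ρ : ℝ} (hρ : 0 ≤ ρ) :
    ∫⁻ y, ν (Metric.closedBall y ρ) ^ 2 ≤
      ENNReal.ofReal ((2 * ρ) ^ Fintype.card ι) * ν.prod ν {p | dist p.1 p.2 ≤ 2 * ρ} := by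
  set E : Set ((ι → ℝ) × (ι → ℝ)) := {p | dist p.1 p.2 ≤ 2 * ρ} with hE
  set T : Set (((ι → ℝ) × (ι → ℝ)) × (ι → ℝ)) :=
    {z | dist z.1.1 z.2 ≤ ρ ∧ dist z.1.2 z.2 ≤ ρ}
  have hTm : MeasurableSet T :=
    (measurableSet_le (measurable_fst.fst.dist measurable_snd) measurable_const).inter
      (measurableSet_le (measurable_fst.snd.dist measurable_snd) measurable_const)
  calc
    _ = ∫⁻ y, ν.prod ν (Metric.closedBall y ρ ×ˢ Metric.closedBall y ρ) := by
      simp only [Measure.prod_prod, sq]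
    _ = (ν.prod ν).prod volume T := (Measure.prod_apply_symm hTm).symm
    _ = ∫⁻ p, volume (Prod.mk p ⁻¹' T) ∂ν.prod ν := Measure.prod_apply hTm
    _ ≤ ∫⁻ p, E.indicator (fun _ => ENNReal.ofReal ((2 * ρ) ^ Fintype.card ι)) p ∂ν.prod ν := by
      refine lintegral_mono fun p => ?_
      by_cases hp : p ∈ E
      · rw [indicator_of_mem hp, ← Real.volume_pi_closedBall p.1 hρ]
        exact measure_mono fun y hy => Metric.mem_closedBall'.2 hy.1
      · rw [indicator_of_notMem hp, nonpos_iff_eq_zero]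
        refine measure_mono_null (fun y hy => hp ?_) measure_empty
        rw [hE, mem_ofPred_eq, two_mul]
        exact (dist_triangle_right _ _ y).trans (add_le_add hy.1 hy.2)
    _ = _ := lintegral_indicator_const (measurableSet_dist_le _) _

theorem sq_measure_le_volume_cthickening_mul {B : Set (ι → ℝ)} (hB : MeasurableSet B) {ρ : ℝ}
    (hρ : 0 ≤ ρ) :
    (ENNReal.ofReal ((2 * ρ) ^ Fintype.card ι) * ν B) ^ 2 ≤
      volume (Metric.cthickening ρ B) * ∫⁻ y, ν (Metric.closedBall y ρ) ^ 2 := by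
  have hsupp (y : ι → ℝ) (hy : y ∉ Metric.cthickening ρ B) :
      ν.restrict B (Metric.closedBall y ρ) = 0 := by
    rw [Measure.restrict_apply' hB]
    refine measure_mono_null (fun z hz => hy ?_) measure_empty
    exact Metric.mem_cthickening_of_dist_le y z ρ B hz.2 (Metric.mem_closedBall'.1 hz.1)
  calc
    _ = (∫⁻ y, ν.restrict B (Metric.closedBall y ρ)) ^ 2 := by
      rw [lintegral_measure_closedBall _ hρ, Measure.restrict_apply_univ]
    _ ≤ volume (Metric.cthickening ρ B) * ∫⁻ y, ν.restrict B (Metric.closedBall y ρ) ^ 2 :=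
      sq_lintegral_le_measure_mul_lintegral_sq
        (measurable_measure_closedBall (ν.restrict B) ρ).aemeasurable
        Metric.isClosed_cthickening.measurableSet hsupp
    _ ≤ _ := by
      gcongr
      exact Measure.restrict_le_self

end ClosedBall

section FourierStieltjes

variable {ι : Type*} [Fintype ι]

/-- The Gaussian `exp (-π r² |x|²)` on `ℝ^ι`, with `|x|` the Euclidean norm (the norm of `ι → ℝ` is
the sup norm). -/
def piGaussian (r : ℝ) (x : ι → ℝ) : ℝ := Real.exp (-(π * r ^ 2) * ∑ i, x i ^ 2)

/-- The Fourier–Stieltjes transform `x ↦ ∫ e(x · y) dν(y)` of a measure `ν` on `ℝ^ι`. -/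
def fourierStieltjes (ν : Measure (ι → ℝ)) (x : ι → ℝ) : ℂ := ∫ y, (𝐞 (x ⬝ᵥ y) : ℂ) ∂ν

theorem measurable_piGaussian (r : ℝ) : Measurable (piGaussian r : (ι → ℝ) → ℝ) := by
  unfold piGaussian
  fun_prop

theorem piGaussian_pos (r : ℝ) (x : ι → ℝ) : 0 < piGaussian r x := Real.exp_pos _

theorem piGaussian_le_one (r : ℝ) (x : ι → ℝ) : piGaussian r x ≤ 1 :=
  Real.exp_le_one_iff.2 <|
    mul_nonpos_of_nonpos_of_nonneg (neg_nonpos.2 (by positivity)) (by positivity)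

theorem exp_neg_pi_pow_card_le_piGaussian_inv {r : ℝ} (hr : 0 < r) {x : ι → ℝ} (hx : ‖x‖ ≤ r) :
    Real.exp (-π) ^ Fintype.card ι ≤ piGaussian r⁻¹ x := by
  have hsum : ∑ i, x i ^ 2 ≤ Fintype.card ι * r ^ 2 := by
    rw [← nsmul_eq_mul]
    exact Finset.sum_le_card_nsmul _ _ _ fun i _ =>
      sq_le_sq.2 <| ((norm_le_pi_norm x i).trans hx).trans (le_abs_self r)
  rw [← Real.exp_nat_mul, piGaussian, Real.exp_le_exp]
  calc (Fintype.card ι : ℝ) * -π = -(π * r⁻¹ ^ 2) * (Fintype.card ι * r ^ 2) := by field_simp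
    _ ≤ -(π * r⁻¹ ^ 2) * ∑ i, x i ^ 2 :=
      mul_le_mul_of_nonpos_left hsum (neg_nonpos.2 (by positivity))

theorem piGaussian_mul_fourierChar_eq_cexp (r : ℝ) (x d : ι → ℝ) :
    (piGaussian r x : ℂ) * 𝐞 (x ⬝ᵥ d) =
      Complex.exp (-∑ i, ((π * r ^ 2 : ℝ) : ℂ) * (x i : ℂ) ^ 2
        + ∑ i, (2 * π * Complex.I * d i) * x i) := by
  rw [piGaussian, Real.fourierChar_apply, Complex.ofReal_exp, ← Complex.exp_add]
  simp only [dotProduct, Complex.ofReal_mul, Complex.ofReal_neg, Complex.ofReal_sum,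
    Complex.ofReal_pow, Finset.mul_sum, Finset.sum_mul, neg_mul, Finset.sum_neg_distrib]
  congr 2
  exact Finset.sum_congr rfl fun i _ => by push_cast; ring

theorem integral_piGaussian_mul_fourierChar {r : ℝ} (hr : 0 < r) (d : ι → ℝ) :
    ∫ x : ι → ℝ, (piGaussian r x : ℂ) * 𝐞 (x ⬝ᵥ d) =
      ((r⁻¹ ^ Fintype.card ι * piGaussian r⁻¹ d : ℝ) : ℂ) := by
  have hsqrt : ((π : ℂ) / (π * r ^ 2 : ℝ)) ^ (1 / 2 : ℂ) = (r⁻¹ : ℝ) := by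
    have hdiv : (π : ℂ) / (π * r ^ 2 : ℝ) = ((r⁻¹ ^ 2 : ℝ) : ℂ) := by
      rw [← Complex.ofReal_div, div_mul_cancel_left₀ Real.pi_ne_zero, inv_pow]
    rw [hdiv, show (1 / 2 : ℂ) = ((1 / 2 : ℝ) : ℂ) by norm_num,
      ← Complex.ofReal_cpow (by positivity), ← Real.sqrt_eq_rpow, Real.sqrt_sq (by positivity)]
  have hexp (t : ℝ) : (2 * π * Complex.I * t) ^ 2 / (4 * (π * r ^ 2 : ℝ)) =
      ((-(π * r⁻¹ ^ 2) * t ^ 2 : ℝ) : ℂ) := by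
    have hr' : (r : ℂ) ≠ 0 := by exact_mod_cast hr.ne'
    have hπ : (π : ℂ) ≠ 0 := by exact_mod_cast Real.pi_ne_zero
    push_cast
    rw [mul_pow, mul_pow, Complex.I_sq]
    field_simp
    ring
  simp only [piGaussian_mul_fourierChar_eq_cexp]
  rw [GaussianFourier.integral_cexp_neg_sum_mul_add
    (fun _ => by rw [Complex.ofReal_re]; positivity)]
  simp only [hsqrt, hexp, Finset.prod_mul_distrib, Finset.prod_const, Finset.card_univ]
  rw [piGaussian, Finset.mul_sum, Real.exp_sum]
  push_cast
  rfl

theorem integrable_piGaussian {r : ℝ} (hr : 0 < r) : Integrable (piGaussian r : (ι → ℝ) → ℝ) := by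
  have h := GaussianFourier.integrable_cexp_neg_sum_mul_add (ι := ι)
    (b := fun _ => ((π * r ^ 2 : ℝ) : ℂ)) (fun _ => by rw [Complex.ofReal_re]; positivity)
    (fun _ => 2 * π * Complex.I * (0 : ℝ))
  refine h.norm.congr (.of_forall fun x => ?_)
  simp only
  rw [← piGaussian_mul_fourierChar_eq_cexp r x fun _ => 0, norm_mul, Circle.norm_coe, mul_one,
    Complex.norm_real, Real.norm_of_nonneg (piGaussian_pos r x).le]

variable (ν : Measure (ι → ℝ)) [IsFiniteMeasure ν]

theorem ofReal_norm_fourierStieltjes_sq (x : ι → ℝ) :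
    ((‖fourierStieltjes ν x‖ ^ 2 : ℝ) : ℂ) =
      ∫ p : (ι → ℝ) × (ι → ℝ), (𝐞 (x ⬝ᵥ (p.1 - p.2)) : ℂ) ∂ν.prod ν := by
  have hchar (p : (ι → ℝ) × (ι → ℝ)) : (𝐞 (x ⬝ᵥ (p.1 - p.2)) : ℂ) =
      (𝐞 (x ⬝ᵥ p.1) : ℂ) * starRingEnd ℂ (𝐞 (x ⬝ᵥ p.2) : ℂ) := by
    rw [dotProduct_sub, sub_eq_add_neg, AddChar.map_add_eq_mul, AddChar.map_neg_eq_inv,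
      Circle.coe_mul, Circle.coe_inv_eq_conj]
  simp only [hchar]
  rw [integral_prod_mul (fun y => (𝐞 (x ⬝ᵥ y) : ℂ)) fun y => starRingEnd ℂ (𝐞 (x ⬝ᵥ y) : ℂ),
    integral_conj, ← fourierStieltjes, Complex.mul_conj, Complex.normSq_eq_norm_sq]

theorem integrable_piGaussian_mul_fourierChar_sub {r : ℝ} (hr : 0 < r) :
    Integrable (fun z : (ι → ℝ) × ((ι → ℝ) × (ι → ℝ)) =>
      (piGaussian r z.1 : ℂ) * 𝐞 (z.1 ⬝ᵥ (z.2.1 - z.2.2))) (volume.prod (ν.prod ν)) := by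
  refine ((integrable_piGaussian hr).mul_prod (integrable_const (1 : ℝ))).mono ?_ ?_
  · have : Continuous fun z : (ι → ℝ) × ((ι → ℝ) × (ι → ℝ)) =>
        (piGaussian r z.1 : ℂ) * 𝐞 (z.1 ⬝ᵥ (z.2.1 - z.2.2)) := by
      unfold piGaussian dotProduct
      have := Real.continuous_fourierChar
      fun_prop
    exact this.aestronglyMeasurable
  · refine .of_forall fun z => ?_
    rw [norm_mul, Circle.norm_coe, Complex.norm_real, mul_one, mul_one]

/-- Plancherel with a Gaussian cutoff. -/
theorem lintegral_piGaussian_mul_norm_fourierStieltjes_sq {r : ℝ} (hr : 0 < r) :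
    ∫⁻ x, ENNReal.ofReal (piGaussian r x * ‖fourierStieltjes ν x‖ ^ 2) =
      ∫⁻ p : (ι → ℝ) × (ι → ℝ),
        ENNReal.ofReal (r⁻¹ ^ Fintype.card ι * piGaussian r⁻¹ (p.1 - p.2)) ∂ν.prod ν := by
  have hint := integrable_piGaussian_mul_fourierChar_sub ν hr
  have hleft (x : ι → ℝ) :
      ∫ p : (ι → ℝ) × (ι → ℝ), (piGaussian r x : ℂ) * 𝐞 (x ⬝ᵥ (p.1 - p.2)) ∂ν.prod ν =
        ((piGaussian r x * ‖fourierStieltjes ν x‖ ^ 2 : ℝ) : ℂ) := by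
    rw [integral_const_mul, ← ofReal_norm_fourierStieltjes_sq, Complex.ofReal_mul]
  have hright (p : (ι → ℝ) × (ι → ℝ)) :
      ∫ x, (piGaussian r x : ℂ) * 𝐞 (x ⬝ᵥ (p.1 - p.2)) =
        ((r⁻¹ ^ Fintype.card ι * piGaussian r⁻¹ (p.1 - p.2) : ℝ) : ℂ) :=
    integral_piGaussian_mul_fourierChar hr _
  have hswap : ∫ x, piGaussian r x * ‖fourierStieltjes ν x‖ ^ 2 =
      ∫ p : (ι → ℝ) × (ι → ℝ), r⁻¹ ^ Fintype.card ι * piGaussian r⁻¹ (p.1 - p.2) ∂ν.prod ν := by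
    apply Complex.ofReal_injective
    rw [← integral_complex_ofReal, ← integral_complex_ofReal,
      ← integral_congr_ae (.of_forall hleft), ← integral_congr_ae (.of_forall hright),
      integral_integral_swap hint]
  have hleft_int : Integrable fun x => piGaussian r x * ‖fourierStieltjes ν x‖ ^ 2 := by
    have := hint.integral_prod_left
    simp only [hleft] at this
    exact this.re
  have hright_int : Integrable (fun p : (ι → ℝ) × (ι → ℝ) =>
      r⁻¹ ^ Fintype.card ι * piGaussian r⁻¹ (p.1 - p.2)) (ν.prod ν) := by
    have := hint.integral_prod_right
    simp only [hright] at this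
    exact this.re
  rw [← ofReal_integral_eq_lintegral_ofReal hleft_int, hswap,
    ofReal_integral_eq_lintegral_ofReal hright_int]
  · exact .of_forall fun p => mul_nonneg (by positivity) (piGaussian_pos _ _).le
  · exact .of_forall fun x => mul_nonneg (piGaussian_pos r x).le (by positivity)

theorem measure_dist_le_le_lintegral_fourierStieltjes_sq {r : ℝ} (hr : 0 < r) :
    ENNReal.ofReal (Real.exp (-π) ^ Fintype.card ι) * ν.prod ν {p | dist p.1 p.2 ≤ r} ≤
      ENNReal.ofReal (r ^ Fintype.card ι) * ∫⁻ x, ‖fourierStieltjes ν x‖ₑ ^ 2 := by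
  set N := Fintype.card ι
  have hpairs : ENNReal.ofReal (r⁻¹ ^ N * Real.exp (-π) ^ N) *
      ν.prod ν {p | dist p.1 p.2 ≤ r} ≤ ∫⁻ x, ‖fourierStieltjes ν x‖ₑ ^ 2 :=
    calc
      _ ≤ ENNReal.ofReal (r⁻¹ ^ N * Real.exp (-π) ^ N) * ν.prod ν
            {p | ENNReal.ofReal (r⁻¹ ^ N * Real.exp (-π) ^ N) ≤
              ENNReal.ofReal (r⁻¹ ^ N * piGaussian r⁻¹ (p.1 - p.2))} := by
        gcongr with p
        intro hp
        gcongr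
        exact exp_neg_pi_pow_card_le_piGaussian_inv hr (dist_eq_norm p.1 p.2 ▸ hp)
      _ ≤ ∫⁻ p, ENNReal.ofReal (r⁻¹ ^ N * piGaussian r⁻¹ (p.1 - p.2)) ∂ν.prod ν :=
        mul_meas_ge_le_lintegral (((measurable_piGaussian _).comp
          (measurable_fst.sub measurable_snd)).const_mul _).ennreal_ofReal _
      _ = ∫⁻ x, ENNReal.ofReal (piGaussian r x * ‖fourierStieltjes ν x‖ ^ 2) :=
        (lintegral_piGaussian_mul_norm_fourierStieltjes_sq ν hr).symm
      _ ≤ ∫⁻ x, ‖fourierStieltjes ν x‖ₑ ^ 2 := by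
        refine lintegral_mono fun x => ?_
        rw [← ofReal_norm, ← ENNReal.ofReal_pow (norm_nonneg _)]
        exact ENNReal.ofReal_le_ofReal
          (mul_le_of_le_one_left (by positivity) (piGaussian_le_one r x))
  calc
    _ = ENNReal.ofReal (r ^ N) *
        (ENNReal.ofReal (r⁻¹ ^ N * Real.exp (-π) ^ N) * ν.prod ν {p | dist p.1 p.2 ≤ r}) := by
      rw [← mul_assoc, ← ENNReal.ofReal_mul (by positivity), ← mul_assoc, ← mul_pow,
        mul_inv_cancel₀ hr.ne', one_pow, one_mul]
    _ ≤ _ := by gcongr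

theorem tsum_sq_measure_div_volume_cthickening_le {κ : Type*} [Countable κ]
    {νs : κ → Measure (ι → ℝ)} (hνs : Measure.sum νs ≤ ν) {B : κ → Set (ι → ℝ)}
    (hB : ∀ m, MeasurableSet (B m)) {ρ : ℝ} (hρ : 0 < ρ) :
    ENNReal.ofReal (Real.exp (-π) ^ Fintype.card ι) *
        ∑' m, νs m (B m) ^ 2 / volume (Metric.cthickening ρ (B m)) ≤
      ∫⁻ x, ‖fourierStieltjes ν x‖ₑ ^ 2 := by
  set R := ENNReal.ofReal ((2 * ρ) ^ Fintype.card ι)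
  have hR0 : R ^ 2 ≠ 0 := pow_ne_zero _ (ENNReal.ofReal_pos.2 (by positivity)).ne'
  have hRt : R ^ 2 ≠ ⊤ := ENNReal.pow_ne_top ENNReal.ofReal_ne_top
  have hfin (m : κ) : IsFiniteMeasure (νs m) :=
    isFiniteMeasure_of_le ν ((Measure.le_sum νs m).trans hνs)
  have hterm (m : κ) : R ^ 2 * (νs m (B m) ^ 2 / volume (Metric.cthickening ρ (B m))) ≤
      ∫⁻ y, νs m (Metric.closedBall y ρ) ^ 2 := by
    rw [← mul_div_assoc, ← mul_pow]
    exact ENNReal.div_le_of_le_mul' (sq_measure_le_volume_cthickening_mul (νs m) (hB m) hρ.le)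
  have hsum : R ^ 2 * ∑' m, νs m (B m) ^ 2 / volume (Metric.cthickening ρ (B m)) ≤
      R * ν.prod ν {p | dist p.1 p.2 ≤ 2 * ρ} :=
    calc
      _ ≤ ∑' m, ∫⁻ y, νs m (Metric.closedBall y ρ) ^ 2 := by
        rw [← ENNReal.tsum_mul_left]
        exact ENNReal.tsum_le_tsum hterm
      _ = ∫⁻ y, ∑' m, νs m (Metric.closedBall y ρ) ^ 2 :=
        (lintegral_tsum fun m =>
          ((measurable_measure_closedBall (νs m) ρ).pow_const 2).aemeasurable).symm
      _ ≤ ∫⁻ y, ν (Metric.closedBall y ρ) ^ 2 := by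
        refine lintegral_mono fun y => (tsum_sq_le_sq_tsum _).trans ?_
        rw [← Measure.sum_apply _ Metric.isClosed_closedBall.measurableSet]
        gcongr
      _ ≤ _ := lintegral_measure_closedBall_sq_le ν hρ.le
  refine (ENNReal.mul_le_mul_iff_right hR0 hRt).1 ?_
  calc
    _ = ENNReal.ofReal (Real.exp (-π) ^ Fintype.card ι) *
        (R ^ 2 * ∑' m, νs m (B m) ^ 2 / volume (Metric.cthickening ρ (B m))) := by ring
    _ ≤ R * (ENNReal.ofReal (Real.exp (-π) ^ Fintype.card ι) *
        ν.prod ν {p | dist p.1 p.2 ≤ 2 * ρ}) := by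
      rw [mul_left_comm R]
      gcongr
    _ ≤ R * (R * ∫⁻ x, ‖fourierStieltjes ν x‖ₑ ^ 2) :=
      mul_le_mul_right (measure_dist_le_le_lintegral_fourierStieltjes_sq ν (by positivity)) _
    _ = _ := by ring

theorem tsum_sq_measure_div_volume_le_lintegral_fourierStieltjes_sq {κ : Type*} [Countable κ]
    {νs : κ → Measure (ι → ℝ)} (hνs : Measure.sum νs ≤ ν) {B : κ → Set (ι → ℝ)}
    (hB : ∀ m, IsCompact (B m)) :
    ENNReal.ofReal (Real.exp (-π) ^ Fintype.card ι) * ∑' m, νs m (B m) ^ 2 / volume (B m) ≤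
      ∫⁻ x, ‖fourierStieltjes ν x‖ₑ ^ 2 := by
  have hfin (m : κ) : νs m (B m) ≠ ⊤ :=
    ((((Measure.le_sum νs m).trans hνs) _).trans_lt (measure_lt_top ν _)).ne
  rw [← ENNReal.tsum_mul_left]
  refine ENNReal.summable.tsum_le_of_sum_le fun t => ?_
  have hlim (m : κ) : Filter.Tendsto
      (fun ρ => νs m (B m) ^ 2 / volume (Metric.cthickening ρ (B m))) (𝓝[>] 0)
      (𝓝 (νs m (B m) ^ 2 / volume (B m))) :=
    ENNReal.Tendsto.const_div
      ((tendsto_measure_cthickening_of_isCompact (hB m)).mono_left nhdsWithin_le_nhds)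
      (.inr (ENNReal.pow_ne_top (hfin m)))
  rw [← Finset.mul_sum]
  refine le_of_tendsto (ENNReal.Tendsto.const_mul (tendsto_finsetSum t fun m _ => hlim m)
    (.inr ENNReal.ofReal_ne_top)) ?_
  filter_upwards [self_mem_nhdsWithin] with ρ hρ
  refine le_trans ?_ (tsum_sq_measure_div_volume_cthickening_le ν hνs
    (fun m => (hB m).measurableSet) hρ)
  gcongr
  exact ENNReal.sum_le_tsum t

theorem tsum_sq_measure_div_volume_le_lintegral_fourierStieltjes_map_sq {X κ : Type*}
    [MeasurableSpace X] [Countable κ] (μ : Measure X) [IsFiniteMeasure μ] {F : X → ι → ℝ}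
    (hF : Measurable F) {S : κ → Set X} (hS : ∀ m, MeasurableSet (S m))
    (hdisj : Pairwise (Function.onFun Disjoint S)) {B : κ → Set (ι → ℝ)}
    (hB : ∀ m, IsCompact (B m)) (hSB : ∀ m, MapsTo F (S m) (B m)) :
    ENNReal.ofReal (Real.exp (-π) ^ Fintype.card ι) * ∑' m, μ (S m) ^ 2 / volume (B m) ≤
      ∫⁻ x, ‖fourierStieltjes (μ.map F) x‖ₑ ^ 2 := by
  have hsum : Measure.sum (fun m => (μ.restrict (S m)).map F) ≤ μ.map F := by
    rw [← Measure.map_sum hF.aemeasurable, ← Measure.restrict_iUnion hdisj hS]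
    exact Measure.map_mono Measure.restrict_le_self hF
  have hmass (m : κ) : (μ.restrict (S m)).map F (B m) = μ (S m) := by
    rw [Measure.map_apply hF (hB m).measurableSet, Measure.restrict_apply' (hS m),
      inter_eq_right.2 (hSB m).subset_preimage]
  simpa only [hmass] using
    tsum_sq_measure_div_volume_le_lintegral_fourierStieltjes_sq (μ.map F) hsum hB

end FourierStieltjes

section MomentVector

open Polynomial

/-- The moment vector `φ_k(u, v)` of the point `(u, v)`: the monomials of degree from `1`
to `k`. -/
def momentVec (k : ℕ) (u v : ℝ) : Idx k → ℝ := fun β => u ^ (β.1.1 : ℕ) * v ^ (β.1.2 : ℕ)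

theorem sum_prod_fin_eq_sum_idx_add {M : Type*} [AddCommMonoid M] (k : ℕ)
    (g : Fin (k + 1) × Fin (k + 1) → M) (hg : ∀ β, k < (β.1 : ℕ) + (β.2 : ℕ) → g β = 0) :
    ∑ β, g β = ∑ β : Idx k, g β.1 + g (0, 0) := by
  rw [← Fintype.sum_subtype_add_sum_subtype
    (fun β : Fin (k + 1) × Fin (k + 1) => 1 ≤ (β.1 : ℕ) + (β.2 : ℕ) ∧ (β.1 : ℕ) + (β.2 : ℕ) ≤ k) g]
  congr 1
  refine Fintype.sum_eq_single (⟨(0, 0), by simp⟩ : {β : Fin (k + 1) × Fin (k + 1) //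
    ¬ (1 ≤ (β.1 : ℕ) + (β.2 : ℕ) ∧ (β.1 : ℕ) + (β.2 : ℕ) ≤ k)}) ?_
  rintro ⟨⟨i, l⟩, hil⟩ hne
  refine hg _ (not_le.1 fun hle => hne ?_)
  simp only [Subtype.mk.injEq, Prod.mk.injEq, Fin.ext_iff, Fin.val_zero]
  simp only at hil hle
  omega

/-- The coefficient of `w ^ i * v ^ l` in `(w + q(v)) ^ m * v ^ n`. -/
def shearCoeff (q : ℝ[X]) (m n i l : ℕ) : ℝ := m.choose i * (q ^ (m - i) * X ^ n).coeff l

theorem natDegree_pow_mul_X_pow_le {q : ℝ[X]} (hq : q.natDegree ≤ 1) (m n : ℕ) :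
    (q ^ m * X ^ n).natDegree ≤ m + n :=
  natDegree_mul_le_of_le ((natDegree_pow_le_of_le m hq).trans (mul_one m).le)
    (natDegree_X_pow_le n)

theorem shearCoeff_of_lt (q : ℝ[X]) {m i : ℕ} (h : m < i) (n l : ℕ) :
    shearCoeff q m n i l = 0 := by
  rw [shearCoeff, Nat.choose_eq_zero_of_lt h, Nat.cast_zero, zero_mul]

theorem shearCoeff_of_add_lt_add {q : ℝ[X]} (hq : q.natDegree ≤ 1) {m n i l : ℕ}
    (h : m + n < i + l) : shearCoeff q m n i l = 0 := by
  rcases lt_or_ge m i with hi | hi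
  · exact shearCoeff_of_lt q hi n l
  · rw [shearCoeff, coeff_eq_zero_of_natDegree_lt, mul_zero]
    exact (natDegree_pow_mul_X_pow_le hq (m - i) n).trans_lt (by omega)

theorem shearCoeff_self (q : ℝ[X]) (m n l : ℕ) :
    shearCoeff q m n m l = if l = n then 1 else 0 := by
  simp only [shearCoeff, Nat.choose_self, Nat.cast_one, Nat.sub_self, pow_zero, one_mul,
    coeff_X_pow]

theorem add_eval_pow_mul_pow_eq_sum_shearCoeff {q : ℝ[X]} (hq : q.natDegree ≤ 1) {k m n : ℕ}
    (h : m + n ≤ k) (w v : ℝ) :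
    (w + q.eval v) ^ m * v ^ n = ∑ β : Fin (k + 1) × Fin (k + 1),
      shearCoeff q m n β.1 β.2 * (w ^ (β.1 : ℕ) * v ^ (β.2 : ℕ)) := by
  have heval (i : ℕ) : (q.eval v) ^ (m - i) * v ^ n =
      ∑ l ∈ Finset.range (k + 1), (q ^ (m - i) * X ^ n).coeff l * v ^ l := by
    rw [← eval_eq_sum_range'
      ((natDegree_pow_mul_X_pow_le hq (m - i) n).trans_lt (by omega : _ < k + 1)) v]
    simp only [eval_mul, eval_pow, eval_X]
  calc
    _ = ∑ i ∈ Finset.range (m + 1), ∑ l ∈ Finset.range (k + 1),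
          shearCoeff q m n i l * (w ^ i * v ^ l) := by
      rw [add_pow, Finset.sum_mul]
      refine Finset.sum_congr rfl fun i _ => ?_
      rw [mul_right_comm, mul_assoc (w ^ i), heval, Finset.mul_sum, Finset.sum_mul]
      exact Finset.sum_congr rfl fun l _ => by rw [shearCoeff]; ring
    _ = ∑ i ∈ Finset.range (k + 1), ∑ l ∈ Finset.range (k + 1),
          shearCoeff q m n i l * (w ^ i * v ^ l) := by
      refine Finset.sum_subset (Finset.range_subset_range.2 (by omega)) fun i _ hi => ?_
      refine Finset.sum_eq_zero fun l _ => ?_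
      rw [shearCoeff_of_lt q (by simpa using hi), zero_mul]
    _ = _ := by
      simp only [Finset.sum_range, Fintype.sum_prod_type]

/-- Ordered by the degree in `u`, the matrix of a shear acting on monomials is unitriangular. -/
theorem exists_det_eq_one_momentVec_add_eval (k : ℕ) {q : ℝ[X]} (hq : q.natDegree ≤ 1) :
    ∃ (L : (Idx k → ℝ) →ₗ[ℝ] (Idx k → ℝ)) (c : Idx k → ℝ), LinearMap.det L = 1 ∧
      ∀ w v, momentVec k (w + q.eval v) v = L (momentVec k w v) + c := by
  classical
  let M : Matrix (Idx k) (Idx k) ℝ := fun β β' => shearCoeff q β.1.1 β.1.2 β'.1.1 β'.1.2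
  have htri : M.BlockTriangular fun β => OrderDual.toDual (β.1.1 : ℕ) := fun β β' h =>
    shearCoeff_of_lt q (OrderDual.toDual_lt_toDual.1 h) _ _
  have hblock (a : ℕᵒᵈ) : M.toSquareBlock (fun β => OrderDual.toDual (β.1.1 : ℕ)) a = 1 := by
    ext ⟨β, hβ⟩ ⟨β', hβ'⟩
    have hfst : (β'.1.1 : ℕ) = β.1.1 := OrderDual.toDual.injective (hβ'.trans hβ.symm)
    change shearCoeff q β.1.1 β.1.2 β'.1.1 β'.1.2 = _
    rw [hfst, shearCoeff_self, Matrix.one_apply]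
    simp only [Subtype.mk.injEq]
    refine if_congr ⟨fun hsnd => ?_, fun h => by rw [h]⟩ rfl rfl
    exact Subtype.ext (Prod.ext (Fin.ext hfst.symm) (Fin.ext hsnd.symm))
  refine ⟨Matrix.toLin' M, fun β => shearCoeff q β.1.1 β.1.2 0 0, ?_, fun w v => ?_⟩
  · simp only [LinearMap.det_toLin', htri.det, hblock, Matrix.det_one, Finset.prod_const_one]
  · ext β
    rw [momentVec, add_eval_pow_mul_pow_eq_sum_shearCoeff hq β.2.2, sum_prod_fin_eq_sum_idx_add]
    · simp only [Fin.val_zero, pow_zero, mul_one]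
      rfl
    · intro β' hβ'
      rw [shearCoeff_of_add_lt_add hq (β.2.2.trans_lt hβ'), zero_mul]

theorem six_mul_sum_range_mul_sub (k : ℕ) :
    6 * ∑ i ∈ Finset.range (k + 1), i * (k + 1 - i) = k * (k + 1) * (k + 2) := by
  induction k with
  | zero => rfl
  | succ k ih =>
    have hterm : ∀ i ∈ Finset.range (k + 1), i * (k + 1 + 1 - i) = i * (k + 1 - i) + i := by
      intro i hi
      rw [Nat.succ_sub (Finset.mem_range.1 hi).le, Nat.mul_succ]
    have hgauss := Finset.sum_range_id_mul_two (k + 1)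
    rw [Nat.add_sub_cancel] at hgauss
    rw [Finset.sum_range_succ, Finset.sum_congr rfl hterm, Finset.sum_add_distrib,
      Nat.add_sub_cancel_left]
    linear_combination ih + 3 * hgauss

theorem sum_idx_fst_eq_sum_range (k : ℕ) :
    ∑ β : Idx k, (β.1.1 : ℕ) = ∑ i ∈ Finset.range (k + 1), i * (k + 1 - i) := by
  have hsplit := sum_prod_fin_eq_sum_idx_add k
    (fun β => if (β.1 : ℕ) + (β.2 : ℕ) ≤ k then (β.1 : ℕ) else 0) fun _ h => if_neg (not_le.2 h)
  have hcount (i : ℕ) : (Finset.range (k + 1)).filter (fun l => i + l ≤ k) =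
      Finset.range (k + 1 - i) := by
    ext l
    simp only [Finset.mem_filter, Finset.mem_range]
    omega
  calc
    _ = ∑ β : Idx k, if (β.1.1 : ℕ) + (β.1.2 : ℕ) ≤ k then (β.1.1 : ℕ) else 0 :=
      Finset.sum_congr rfl fun β _ => (if_pos β.2.2).symm
    _ = ∑ β : Fin (k + 1) × Fin (k + 1),
          if (β.1 : ℕ) + (β.2 : ℕ) ≤ k then (β.1 : ℕ) else 0 := by
      rw [hsplit, Fin.val_zero, ite_self, add_zero]
    _ = ∑ i ∈ Finset.range (k + 1), ∑ l ∈ Finset.range (k + 1), if i + l ≤ k then i else 0 := by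
      simp only [Finset.sum_range, Fintype.sum_prod_type]
    _ = _ := by
      simp only [← Finset.sum_filter, hcount, Finset.sum_const, Finset.card_range, smul_eq_mul,
        mul_comm]

theorem six_mul_sum_idx_fst (k : ℕ) :
    6 * ∑ β : Idx k, (β.1.1 : ℕ) = k * (k + 1) * (k + 2) := by
  rw [sum_idx_fst_eq_sum_range, six_mul_sum_range_mul_sub]

end MomentVector

section LineTuples

/-- The sheared rectangle of the points `ξ` of the plane with height `ξ 1 ∈ I` whose horizontal
displacement from the line `ξ 0 = α + γ * ξ 1` lies in `J`. -/
def shearedRect (α γ : ℝ) (I J : Set ℝ) : Set (Fin 2 → ℝ) :=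
  {ξ | ξ 1 ∈ I ∧ ξ 0 - (α + γ * ξ 1) ∈ J}

theorem shearedRect_mono (α γ : ℝ) {I I' J J' : Set ℝ} (hI : I ⊆ I') (hJ : J ⊆ J') :
    shearedRect α γ I J ⊆ shearedRect α γ I' J' := fun _ h => ⟨hI h.1, hJ h.2⟩

theorem measurableSet_shearedRect (α γ : ℝ) {I J : Set ℝ} (hI : MeasurableSet I)
    (hJ : MeasurableSet J) : MeasurableSet (shearedRect α γ I J) :=
  (measurable_pi_apply 1 hI).inter
    ((by fun_prop : Measurable fun ξ : Fin 2 → ℝ => ξ 0 - (α + γ * ξ 1)) hJ)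

theorem volume_shearedRect (α γ : ℝ) (I J : Set ℝ) :
    volume (shearedRect α γ I J) = volume I * volume J := by
  set f : (Fin 2 → ℝ) →ₗ[ℝ] (Fin 2 → ℝ) := Matrix.toLin' !![1, -γ; 0, 1] with hf
  have hdet : LinearMap.det f = 1 := by
    rw [hf, LinearMap.det_toLin', Matrix.det_fin_two_of]
    ring
  have hpre : shearedRect α γ I J = f ⁻¹' univ.pi ![(· + -α) ⁻¹' J, I] := by
    ext ξ
    have hfst : f ξ 0 + -α = ξ 0 - (α + γ * ξ 1) := by
      rw [hf, Matrix.toLin'_apply, Matrix.mulVec, dotProduct, Fin.sum_univ_two]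
      simp only [Matrix.of_apply, Matrix.cons_val_zero, Matrix.cons_val_one]
      ring
    have hsnd : f ξ 1 = ξ 1 := by
      rw [hf, Matrix.toLin'_apply, Matrix.mulVec, dotProduct, Fin.sum_univ_two]
      simp only [Matrix.of_apply, Matrix.cons_val_zero, Matrix.cons_val_one]
      ring
    simp only [shearedRect, mem_ofPred_eq, mem_preimage, mem_univ_pi, Fin.forall_fin_two,
      Matrix.cons_val_zero, Matrix.cons_val_one, hfst, hsnd, and_comm]
  rw [hpre, Measure.addHaar_preimage_linearMap volume (hdet ▸ one_ne_zero), hdet, volume_pi_pi,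
    Fin.prod_univ_two, Matrix.cons_val_zero, Matrix.cons_val_one, Matrix.cons_val_zero,
    measure_preimage_add_right, inv_one, abs_one, ENNReal.ofReal_one, one_mul, mul_comm]

theorem shearedRect_subset_Icc_zero_one {α γ ε : ℝ} (hα : 0 ≤ α) (hγ : 0 ≤ γ)
    (hαγ : α + γ + ε ≤ 1) : shearedRect α γ (Icc 0 1) (Icc 0 ε) ⊆ Icc 0 1 := by
  rintro ξ ⟨⟨hv0, hv1⟩, hw0, hw1⟩
  have hγv0 := mul_nonneg hγ hv0
  have hγv1 := mul_le_of_le_one_right hγ hv1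
  simp only [mem_Icc, Pi.le_def, Fin.forall_fin_two, Pi.zero_apply, Pi.one_apply]
  exact ⟨⟨by linarith, hv0⟩, by linarith, hv1⟩

/-- The heights allowed for the `i`-th point of a tuple in `lineTuples`: point `1` is kept away from
all the others. -/
def heightRange (i : ℕ) : Set ℝ := if i = 1 then Icc (3 / 4) 1 else Icc 0 (1 / 4)

/-- The displacements allowed for the `i`-th point of a tuple in `lineTuples`: points `0` and `1`
are much closer to the line than all the others. -/
def displacementRange (δ : ℝ) (i : ℕ) : Set ℝ :=
  if i ≤ 1 then Icc 0 (δ / 8) else Icc δ (9 / 8 * δ)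

theorem measurableSet_heightRange (i : ℕ) : MeasurableSet (heightRange i) := by
  unfold heightRange
  split_ifs <;> exact measurableSet_Icc

theorem measurableSet_displacementRange (δ : ℝ) (i : ℕ) :
    MeasurableSet (displacementRange δ i) := by
  unfold displacementRange
  split_ifs <;> exact measurableSet_Icc

theorem volume_heightRange (i : ℕ) : volume (heightRange i) = ENNReal.ofReal (1 / 4) := by
  unfold heightRange
  split_ifs <;> rw [Real.volume_Icc] <;> norm_num

theorem volume_displacementRange (δ : ℝ) (i : ℕ) :
    volume (displacementRange δ i) = ENNReal.ofReal (δ / 8) := by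
  unfold displacementRange
  split_ifs <;> rw [Real.volume_Icc] <;> ring_nf

theorem heightRange_subset (i : ℕ) : heightRange i ⊆ Icc 0 1 := by
  unfold heightRange
  split_ifs <;> exact Icc_subset_Icc (by norm_num) (by norm_num)

theorem displacementRange_subset {δ : ℝ} (hδ : 0 ≤ δ) (i : ℕ) :
    displacementRange δ i ⊆ Icc 0 (2 * δ) := by
  unfold displacementRange
  split_ifs <;> exact Icc_subset_Icc (by linarith) (by linarith)

/-- The tuples in the plane whose points `0` and `1` span roughly the line `ξ 0 = α + γ * ξ 1`,
while all later points have displacement about `δ` from it. The tuple thereby remembers both the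
line and the scale `δ`. -/
def lineTuples (s : ℕ) (δ α γ : ℝ) : Set (Fin s → Fin 2 → ℝ) :=
  univ.pi fun i => shearedRect α γ (heightRange i) (displacementRange δ i)

theorem measurableSet_lineTuples (s : ℕ) (δ α γ : ℝ) : MeasurableSet (lineTuples s δ α γ) :=
  .univ_pi fun i => measurableSet_shearedRect α γ (measurableSet_heightRange i)
    (measurableSet_displacementRange δ i)

theorem lineTuples_subset_pi (s : ℕ) {δ : ℝ} (hδ : 0 ≤ δ) (α γ : ℝ) :
    lineTuples s δ α γ ⊆ univ.pi fun _ => shearedRect α γ (Icc 0 1) (Icc 0 (2 * δ)) :=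
  pi_mono fun i _ => shearedRect_mono α γ (heightRange_subset i) (displacementRange_subset hδ i)

/-- Lebesgue measure on the `s`-tuples of points of the unit square. -/
def squareTupleMeasure (s : ℕ) : Measure (Fin s → Fin 2 → ℝ) :=
  Measure.pi fun _ => volume.restrict (Icc 0 1)

instance (s : ℕ) : IsFiniteMeasure (squareTupleMeasure s) := by
  have : IsFiniteMeasure ((volume : Measure (Fin 2 → ℝ)).restrict (Icc 0 1)) :=
    isFiniteMeasure_restrict.2 isCompact_Icc.measure_lt_top.ne
  unfold squareTupleMeasure
  infer_instance

theorem squareTupleMeasure_lineTuples (s : ℕ) {δ α γ : ℝ} (hδ : 0 ≤ δ) (hα : 0 ≤ α) (hγ : 0 ≤ γ)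
    (hαγ : α + γ + 2 * δ ≤ 1) :
    squareTupleMeasure s (lineTuples s δ α γ) = ENNReal.ofReal (δ / 32) ^ s := by
  have hpoint (i : Fin s) : volume.restrict (Icc 0 1)
      (shearedRect α γ (heightRange i) (displacementRange δ i)) = ENNReal.ofReal (δ / 32) := by
    rw [Measure.restrict_eq_self, volume_shearedRect, volume_heightRange, volume_displacementRange,
      ← ENNReal.ofReal_mul (by norm_num)]
    · congr 1
      ring
    · exact (shearedRect_mono α γ (heightRange_subset i) (displacementRange_subset hδ i)).trans
        (shearedRect_subset_Icc_zero_one hα hγ hαγ)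
  simp only [squareTupleMeasure, lineTuples, Measure.pi_pi, hpoint, Finset.prod_const,
    Finset.card_univ, Fintype.card_fin]

theorem abs_add_mul_le_two_mul {x y u v t ε : ℝ} (hu : |x + y * u| ≤ ε) (hv : |x + y * v| ≤ ε)
    (huv : 1 / 2 ≤ v - u) (htu : |t - u| ≤ 1 / 4) : |y| ≤ 4 * ε ∧ |x + y * t| ≤ 2 * ε := by
  have hy : |y| ≤ 4 * ε := by
    have hslope : |y| * (v - u) ≤ ε + ε := by
      rw [← abs_of_nonneg ((by norm_num : (0 : ℝ) ≤ 1 / 2).trans huv), ← abs_mul,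
        show y * (v - u) = x + y * v - (x + y * u) by ring]
      exact (abs_sub _ _).trans (add_le_add hv hu)
    linarith [mul_le_mul_of_nonneg_left huv (abs_nonneg y)]
  refine ⟨hy, ?_⟩
  calc
    |x + y * t| = |(x + y * u) + y * (t - u)| := by ring_nf
    _ ≤ |x + y * u| + |y| * |t - u| := (abs_add_le _ _).trans_eq (by rw [abs_mul])
    _ ≤ ε + 4 * ε * (1 / 4) :=
      add_le_add hu (mul_le_mul hy htu (abs_nonneg _) ((abs_nonneg y).trans hy))
    _ = 2 * ε := by ring

theorem line_close_of_mem_lineTuples {s : ℕ} (hs : 3 ≤ s) {δ δ' α α' γ γ' : ℝ} (hδ : δ' ≤ δ)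
    {ξ : Fin s → Fin 2 → ℝ} (hξ : ξ ∈ lineTuples s δ α γ) (hξ' : ξ ∈ lineTuples s δ' α' γ') :
    |γ' - γ| ≤ δ / 2 ∧ |α' - α + (γ' - γ) * ξ ⟨0, by omega⟩ 1| ≤ δ / 8 ∧ δ ≤ 3 / 2 * δ' := by
  obtain ⟨⟨hv₀, hv₀'⟩, hw₀, hw₀'⟩ := hξ ⟨0, by omega⟩ (mem_univ _)
  obtain ⟨⟨hv₁, -⟩, hw₁, hw₁'⟩ := hξ ⟨1, by omega⟩ (mem_univ _)
  obtain ⟨⟨hv₂, hv₂'⟩, hw₂, -⟩ := hξ ⟨2, by omega⟩ (mem_univ _)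
  obtain ⟨-, hz₀, hz₀'⟩ := hξ' ⟨0, by omega⟩ (mem_univ _)
  obtain ⟨-, hz₁, hz₁'⟩ := hξ' ⟨1, by omega⟩ (mem_univ _)
  obtain ⟨-, -, hz₂'⟩ := hξ' ⟨2, by omega⟩ (mem_univ _)
  have hnear₀ : |α' - α + (γ' - γ) * ξ ⟨0, by omega⟩ 1| ≤ δ / 8 :=
    abs_le.2 ⟨by linarith, by linarith⟩
  have hnear₁ : |α' - α + (γ' - γ) * ξ ⟨1, by omega⟩ 1| ≤ δ / 8 :=
    abs_le.2 ⟨by linarith, by linarith⟩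
  obtain ⟨hslope, hnear₂⟩ := abs_add_mul_le_two_mul hnear₀ hnear₁ (t := ξ ⟨2, by omega⟩ 1)
    (by linarith) (abs_le.2 ⟨by linarith, by linarith⟩)
  exact ⟨by linarith, hnear₀, by linarith [(abs_le.1 hnear₂).2]⟩

end LineTuples

section MomentSum

/-- The sum of the moment vectors of the points of a tuple. -/
def momentSum (k s : ℕ) (ξ : Fin s → Fin 2 → ℝ) : Idx k → ℝ := ∑ i, momentVec k (ξ i 0) (ξ i 1)

theorem measurable_momentSum (k s : ℕ) : Measurable (momentSum k s) := by
  refine measurable_pi_lambda _ fun β => ?_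
  simp only [momentSum, Finset.sum_apply, momentVec]
  fun_prop

theorem momentVec_mem_Icc (k : ℕ) {w v ε : ℝ} (hw : w ∈ Icc 0 ε) (hv : v ∈ Icc 0 1) :
    momentVec k w v ∈ Icc 0 fun β => ε ^ (β.1.1 : ℕ) :=
  ⟨fun _ => mul_nonneg (pow_nonneg hw.1 _) (pow_nonneg hv.1 _), fun _ =>
    (mul_le_of_le_one_right (pow_nonneg hw.1 _) (pow_le_one₀ hv.1 hv.2)).trans
      (pow_le_pow_left₀ hw.1 hw.2 _)⟩

theorem sum_momentVec_mem_Icc (k : ℕ) {s : ℕ} {w v : Fin s → ℝ} {ε : ℝ}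
    (hw : ∀ i, w i ∈ Icc 0 ε) (hv : ∀ i, v i ∈ Icc 0 1) :
    ∑ i, momentVec k (w i) (v i) ∈ Icc 0 fun β => s * ε ^ (β.1.1 : ℕ) := by
  refine ⟨Finset.sum_nonneg fun i _ => (momentVec_mem_Icc k (hw i) (hv i)).1, ?_⟩
  refine (Finset.sum_le_sum fun i _ => (momentVec_mem_Icc k (hw i) (hv i)).2).trans_eq ?_
  ext β
  simp only [Finset.sum_const, Finset.card_univ, Fintype.card_fin, Pi.smul_apply, nsmul_eq_mul]

theorem volume_Icc_zero_mul_pow (k s : ℕ) {ε : ℝ} (hε : 0 ≤ ε) :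
    volume (Icc (0 : Idx k → ℝ) fun β => s * ε ^ (β.1.1 : ℕ)) =
      ENNReal.ofReal (s ^ Fintype.card (Idx k) * ε ^ ∑ β : Idx k, (β.1.1 : ℕ)) := by
  simp only [Real.volume_Icc_pi, Pi.zero_apply, sub_zero]
  rw [← ENNReal.ofReal_prod_of_nonneg fun _ _ => by positivity, Finset.prod_mul_distrib,
    Finset.prod_pow_eq_pow_sum, Finset.prod_const, Finset.card_univ]

open Polynomial in
/-- After a shear, the moment sum of points close to a line lies in an anisotropic box. -/
theorem exists_isCompact_mapsTo_momentSum (k s : ℕ) {ε : ℝ} (hε : 0 ≤ ε) (α γ : ℝ) :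
    ∃ B : Set (Idx k → ℝ), IsCompact B ∧
      volume B = ENNReal.ofReal (s ^ Fintype.card (Idx k) * ε ^ ∑ β : Idx k, (β.1.1 : ℕ)) ∧
      MapsTo (momentSum k s) (univ.pi fun _ => shearedRect α γ (Icc 0 1) (Icc 0 ε)) B := by
  obtain ⟨L, c, hdet, hL⟩ :=
    exists_det_eq_one_momentVec_add_eval k (natDegree_linear_le (a := γ) (b := α))
  refine ⟨(· + s • c) '' (L '' Icc 0 fun β => s * ε ^ (β.1.1 : ℕ)), ?_, ?_, fun ξ hξ => ?_⟩
  · exact (isCompact_Icc.image L.continuous_of_finiteDimensional).image (by fun_prop)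
  · rw [image_add_right, measure_preimage_add_right, Measure.addHaar_image_linearMap, hdet,
      abs_one, ENNReal.ofReal_one, one_mul, volume_Icc_zero_mul_pow k s hε]
  · have hshear (i : Fin s) : momentVec k (ξ i 0) (ξ i 1) =
        L (momentVec k (ξ i 0 - (α + γ * ξ i 1)) (ξ i 1)) + c := by
      rw [← hL, eval_add, eval_mul, eval_C, eval_X, eval_C, add_comm α, sub_add_cancel]
    refine ⟨_, mem_image_of_mem L (sum_momentVec_mem_Icc k (fun i => (hξ i (mem_univ i)).2)
      fun i => (hξ i (mem_univ i)).1), ?_⟩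
    simp only [momentSum, hshear, map_sum, Finset.sum_add_distrib, Finset.sum_const,
      Finset.card_univ, Fintype.card_fin]

theorem Eext_one_pow_eq_fourierStieltjes (k s : ℕ) (x : Idx k → ℝ) :
    Eext k (fun _ => 1) x ^ s =
      fourierStieltjes ((squareTupleMeasure s).map (momentSum k s)) x := by
  have hphase (ξ : Fin s → Fin 2 → ℝ) :
      ∏ i, Complex.exp (2 * π * Complex.I * Pphase k x (ξ i)) = 𝐞 (x ⬝ᵥ momentSum k s ξ) := by
    have hdot : x ⬝ᵥ momentSum k s ξ = ∑ i, Pphase k x (ξ i) := by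
      rw [momentSum, dotProduct_sum]
      simp only [dotProduct, Pphase, momentVec, mul_assoc]
    rw [Real.fourierChar_apply, hdot, ← Complex.exp_sum, ← Finset.mul_sum]
    push_cast
    ring_nf
  rw [fourierStieltjes, integral_map (measurable_momentSum k s).aemeasurable]
  · simp only [← hphase, Eext, one_mul, squareTupleMeasure]
    rw [integral_fintype_prod_eq_pow (ι := Fin s) (μ := volume.restrict (Icc 0 1))
      (fun ξ => Complex.exp (2 * π * Complex.I * Pphase k x ξ)), Fintype.card_fin]
  · have := Real.continuous_fourierChar
    unfold dotProduct
    exact Continuous.aestronglyMeasurable (by fun_prop)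

theorem norm_Eext_one_le_one (k : ℕ) (x : Idx k → ℝ) : ‖Eext k (fun _ => 1) x‖ ≤ 1 := by
  have hvol : volume (Icc (0 : Fin 2 → ℝ) 1) = 1 := by
    simp only [Real.volume_Icc_pi, Pi.one_apply, Pi.zero_apply, sub_zero, ENNReal.ofReal_one,
      Finset.prod_const_one]
  refine (norm_setIntegral_le_of_norm_le_const (C := 1) (hvol ▸ ENNReal.one_lt_top)
    fun ξ _ => ?_).trans_eq (by rw [Measure.real, hvol, ENNReal.toReal_one, one_mul])
  rw [one_mul, show (2 * π * Complex.I * Pphase k x ξ : ℂ) =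
    (2 * π * Pphase k x ξ : ℝ) * Complex.I by push_cast; ring, Complex.norm_exp_ofReal_mul_I]

end MomentSum

section Divergence

/-- The displacement scales `8 ^ (-(j + 1))`. -/
def lineScale (j : ℕ) : ℝ := (1 / 8) ^ (j + 1)

theorem lineScale_pos (j : ℕ) : 0 < lineScale j := by
  unfold lineScale
  positivity

theorem lineScale_le (j : ℕ) : lineScale j ≤ 1 / 8 :=
  pow_le_of_le_one (by norm_num) (by norm_num) j.succ_ne_zero

theorem lineScale_mul_eight_pow (j : ℕ) : lineScale j * 8 ^ j = 1 / 8 := by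
  rw [lineScale, pow_succ, mul_right_comm, ← mul_pow]
  norm_num

theorem lineScale_le_of_lt {i j : ℕ} (h : i < j) : lineScale j ≤ lineScale i / 8 := by
  rw [div_eq_mul_one_div (lineScale i), lineScale, lineScale, ← pow_succ]
  exact pow_le_pow_of_le_one (by norm_num) (by norm_num) (by omega)

/-- The tuples around a line `ξ 0 = δ * a + δ * b * ξ 1` of the lattice of lines at the scale
`δ = lineScale j`, where `⟨j, a, b⟩` is the index. -/
def latticeLineTuples (s : ℕ) (m : Σ j : ℕ, Fin (8 ^ j) × Fin (8 ^ j)) :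
    Set (Fin s → Fin 2 → ℝ) :=
  lineTuples s (lineScale m.1) (lineScale m.1 * m.2.1) (lineScale m.1 * m.2.2)

theorem natCast_eq_of_abs_mul_sub_mul_lt {δ : ℝ} {a b : ℕ} (h : |δ * a - δ * b| < δ) : a = b := by
  have hδ : 0 < δ := (abs_nonneg _).trans_lt h
  rw [← mul_sub, abs_mul, abs_of_pos hδ, mul_lt_iff_lt_one_right hδ] at h
  have hint : |(a : ℤ) - b| < 1 := by exact_mod_cast h
  exact_mod_cast sub_eq_zero.1 (Int.abs_lt_one_iff.1 hint)

theorem eq_of_mem_latticeLineTuples {s : ℕ} (hs : 3 ≤ s)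
    {m m' : Σ j : ℕ, Fin (8 ^ j) × Fin (8 ^ j)} (hm : m.1 ≤ m'.1) {ξ : Fin s → Fin 2 → ℝ}
    (hξ : ξ ∈ latticeLineTuples s m) (hξ' : ξ ∈ latticeLineTuples s m') : m' = m := by
  obtain ⟨j, a, b⟩ := m
  obtain ⟨j', a', b'⟩ := m'
  have hpos := lineScale_pos j
  rcases hm.lt_or_eq with hlt | (rfl : j = j')
  · have hle := lineScale_le_of_lt hlt
    have hclose := (line_close_of_mem_lineTuples hs (hle.trans (by linarith)) hξ hξ').2.2
    exact absurd hclose (by linarith)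
  · obtain ⟨hslope, hpoint, -⟩ := line_close_of_mem_lineTuples hs le_rfl hξ hξ'
    obtain rfl : b' = b :=
      Fin.ext (natCast_eq_of_abs_mul_sub_mul_lt (hslope.trans_lt (by linarith)))
    rw [sub_self, zero_mul, add_zero] at hpoint
    obtain rfl : a' = a :=
      Fin.ext (natCast_eq_of_abs_mul_sub_mul_lt (hpoint.trans_lt (by linarith)))
    rfl

theorem pairwise_disjoint_latticeLineTuples {s : ℕ} (hs : 3 ≤ s) :
    Pairwise (Function.onFun Disjoint (latticeLineTuples s)) := by
  refine fun m m' hne => Set.disjoint_left.2 fun ξ hξ hξ' => hne ?_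
  rcases le_total m.1 m'.1 with h | h
  · exact (eq_of_mem_latticeLineTuples hs h hξ hξ').symm
  · exact eq_of_mem_latticeLineTuples hs h hξ' hξ

theorem squareTupleMeasure_latticeLineTuples (s : ℕ)
    (m : Σ j : ℕ, Fin (8 ^ j) × Fin (8 ^ j)) :
    squareTupleMeasure s (latticeLineTuples s m) = ENNReal.ofReal (lineScale m.1 / 32) ^ s := by
  have hpos := lineScale_pos m.1
  have hcoeff (a : Fin (8 ^ m.1)) : lineScale m.1 * a ≤ 1 / 8 := by
    rw [← lineScale_mul_eight_pow m.1]
    gcongr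
    exact_mod_cast a.2.le
  exact squareTupleMeasure_lineTuples s hpos.le (by positivity) (by positivity)
    (by linarith [hcoeff m.2.1, hcoeff m.2.2, lineScale_le m.1])

/-- The `64 ^ j` lines at scale `lineScale j` contribute the same amount for every `j`. -/
theorem tsum_mul_lineScale_sq_eq_top {c : ℝ} (hc : 0 < c) :
    ∑' m : Σ j : ℕ, Fin (8 ^ j) × Fin (8 ^ j), ENNReal.ofReal (c * lineScale m.1 ^ 2) = ⊤ := by
  have hscale (j : ℕ) : ∑' _ : Fin (8 ^ j) × Fin (8 ^ j), ENNReal.ofReal (c * lineScale j ^ 2) =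
      ENNReal.ofReal (c / 64) := by
    rw [tsum_fintype, Finset.sum_const, Finset.card_univ, Fintype.card_prod, Fintype.card_fin,
      nsmul_eq_mul, ← ENNReal.ofReal_natCast, ← ENNReal.ofReal_mul (by positivity)]
    congr 1
    push_cast
    linear_combination c * (lineScale j * 8 ^ j + 1 / 8) * lineScale_mul_eight_pow j
  rw [ENNReal.tsum_sigma']
  simp only [hscale]
  exact ENNReal.tsum_const_eq_top_of_ne_zero (ENNReal.ofReal_pos.2 (by positivity)).ne'

theorem mul_sq_le_pow_div_mul_pow {s N D : ℕ} (hs : 0 < s) (hsD : 2 * s ≤ D + 2) {δ : ℝ}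
    (hδ : 0 < δ) (hδ1 : δ ≤ 1) :
    (32 ^ (2 * s) * s ^ N * 2 ^ D : ℝ)⁻¹ * δ ^ 2 ≤
      (δ / 32) ^ (2 * s) / (s ^ N * (2 * δ) ^ D) := by
  have hpow : δ ^ 2 * δ ^ D ≤ δ ^ (2 * s) := by
    rw [← pow_add, add_comm]
    exact pow_le_pow_of_le_one hδ.le hδ1 hsD
  calc
    _ = (32 ^ (2 * s) * s ^ N * 2 ^ D : ℝ)⁻¹ * (δ ^ 2 * δ ^ D / δ ^ D) := by field_simp
    _ ≤ (32 ^ (2 * s) * s ^ N * 2 ^ D : ℝ)⁻¹ * (δ ^ (2 * s) / δ ^ D) := by gcongr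
    _ = _ := by
      rw [div_pow, mul_pow 2 δ]
      field_simp

theorem lintegral_Eext_one_pow_eq_top (k : ℕ) {s : ℕ} (hs : 3 ≤ s)
    (hsk : 2 * s ≤ ∑ β : Idx k, (β.1.1 : ℕ) + 2) :
    ∫⁻ x, ‖Eext k (fun _ => 1) x‖ₑ ^ (2 * s) = ⊤ := by
  set D := ∑ β : Idx k, (β.1.1 : ℕ)
  set N := Fintype.card (Idx k)
  have hs0 : 0 < s := by omega
  choose B hBcompact hBvol hB using fun m : Σ j : ℕ, Fin (8 ^ j) × Fin (8 ^ j) =>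
    exists_isCompact_mapsTo_momentSum k s (mul_nonneg zero_le_two (lineScale_pos m.1).le)
      (lineScale m.1 * m.2.1) (lineScale m.1 * m.2.2)
  have henergy := tsum_sq_measure_div_volume_le_lintegral_fourierStieltjes_map_sq
    (squareTupleMeasure s) (measurable_momentSum k s) (S := latticeLineTuples s)
    (fun _ => measurableSet_lineTuples _ _ _ _) (pairwise_disjoint_latticeLineTuples hs) hBcompact
    fun m => (hB m).mono_left (lineTuples_subset_pi s (lineScale_pos m.1).le _ _)
  have hterm (m : Σ j : ℕ, Fin (8 ^ j) × Fin (8 ^ j)) :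
      ENNReal.ofReal ((32 ^ (2 * s) * s ^ N * 2 ^ D : ℝ)⁻¹ * lineScale m.1 ^ 2) ≤
        squareTupleMeasure s (latticeLineTuples s m) ^ 2 / volume (B m) := by
    have hpos := lineScale_pos m.1
    rw [squareTupleMeasure_latticeLineTuples, hBvol, ← pow_mul, mul_comm s,
      ← ENNReal.ofReal_pow (by positivity), ← ENNReal.ofReal_div_of_pos (by positivity)]
    exact ENNReal.ofReal_le_ofReal (mul_sq_le_pow_div_mul_pow hs0 hsk hpos
      ((lineScale_le m.1).trans (by norm_num)))
  have hdiv : ∑' m, squareTupleMeasure s (latticeLineTuples s m) ^ 2 / volume (B m) = ⊤ :=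
    top_le_iff.1 <| (tsum_mul_lineScale_sq_eq_top (by positivity)).symm.trans_le
      (ENNReal.tsum_le_tsum hterm)
  rw [hdiv, ENNReal.mul_top (ENNReal.ofReal_pos.2 (by positivity)).ne', top_le_iff] at henergy
  simpa only [mul_comm 2 s, pow_mul, ← enorm_pow, Eext_one_pow_eq_fourierStieltjes] using henergy

end Divergence

section Extension

theorem lintegral_ofReal_norm_rpow_eq_top {X E : Type*} [MeasurableSpace X] {μ : Measure X}
    [SeminormedAddCommGroup E] {g : X → E} (hg : ∀ x, ‖g x‖ ≤ 1) {n : ℕ}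
    (h : ∫⁻ x, ‖g x‖ₑ ^ n ∂μ = ⊤) {p : ℝ} (hp : 0 < p) (hpn : p ≤ n) :
    ∫⁻ x, ENNReal.ofReal (‖g x‖ ^ p) ∂μ = ⊤ := by
  refine top_le_iff.1 (h.symm.trans_le (lintegral_mono fun x => ?_))
  rw [← ENNReal.ofReal_rpow_of_nonneg (norm_nonneg _) hp.le, ofReal_norm, ← ENNReal.rpow_natCast]
  refine ENNReal.rpow_le_rpow_of_exponent_ge ?_ hpn
  rw [← ofReal_norm]
  exact ENNReal.ofReal_le_one.2 (hg x)

theorem eLpNorm_eq_top_of_lintegral_ofReal_norm_rpow_eq_top {X E : Type*} [MeasurableSpace X]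
    {μ : Measure X} [SeminormedAddCommGroup E] {g : X → E} {p : ℝ} (hp : 0 < p)
    (h : ∫⁻ x, ENNReal.ofReal (‖g x‖ ^ p) ∂μ = ⊤) : eLpNorm g (ENNReal.ofReal p) μ = ⊤ := by
  rw [eLpNorm_eq_lintegral_rpow_enorm_toReal (ENNReal.ofReal_pos.2 hp).ne' ENNReal.ofReal_ne_top,
    ENNReal.toReal_ofReal hp.le]
  simp only [← ENNReal.ofReal_rpow_of_nonneg (norm_nonneg _) hp.le, ofReal_norm] at h
  rw [h, ENNReal.top_rpow_of_pos (one_div_pos.2 hp)]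

theorem not_exists_eLpNorm_Eext_le (k : ℕ) {p : ℝ≥0∞}
    (h : eLpNorm (Eext k fun _ => 1) p volume = ⊤) :
    ¬ ∃ C : ℝ≥0∞, C < ⊤ ∧ ∀ f : (Fin 2 → ℝ) → ℂ, Measurable f →
      eLpNorm (Eext k f) p volume ≤
        C * eLpNorm f ⊤ (volume.restrict (Icc (0 : Fin 2 → ℝ) 1)) := by
  rintro ⟨C, hC, hCf⟩
  have hone : eLpNorm (fun _ : Fin 2 → ℝ => (1 : ℂ)) ⊤
      (volume.restrict (Icc (0 : Fin 2 → ℝ) 1)) < ⊤ := (memLp_top_const 1).2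
  have hbound := hCf (fun _ => 1) measurable_const
  rw [h, top_le_iff] at hbound
  exact (ENNReal.mul_lt_top hC hone).ne hbound

end Extension

theorem exists_two_mul_le_sum_idx_add_two {k q : ℕ} (hk : 2 ≤ k)
    (hq : (q : ℝ) ≤ (k : ℝ) * (k + 1) * (k + 2) / 6 + 2) (hqEven : Even q) :
    ∃ s, 3 ≤ s ∧ q ≤ 2 * s ∧ 2 * s ≤ ∑ β : Idx k, (β.1.1 : ℕ) + 2 := by
  obtain ⟨r, rfl⟩ := hqEven
  have hsum := six_mul_sum_idx_fst k
  have hq' : 6 * (r + r) ≤ k * (k + 1) * (k + 2) + 12 := by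
    have : (6 * (r + r : ℕ) : ℝ) ≤ k * (k + 1) * (k + 2) + 12 := by linarith
    exact_mod_cast this
  have hk' : 2 * 3 * 4 ≤ k * (k + 1) * (k + 2) := by gcongr <;> omega
  exact ⟨max 3 r, le_max_left _ _, by omega, by omega⟩

theorem extension_estimate_sharp_general (k : ℕ) (hk : 2 ≤ k)
    (q : ℕ) (hq : (q : ℝ) ≤ (k : ℝ) * (k + 1) * (k + 2) / 6 + 2) (hqEven : Even q) :
    ∀ p : ℝ, 0 < p → p ≤ (q : ℝ) →
      (∫⁻ x : Idx k → ℝ, ENNReal.ofReal (‖Eext k (fun _ => 1) x‖ ^ p)) = ⊤ ∧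
      ¬ ∃ C : ℝ≥0∞, C < ⊤ ∧
          ∀ f : (Fin 2 → ℝ) → ℂ, Measurable f →
            eLpNorm (Eext k f) (ENNReal.ofReal p) volume ≤
              C * eLpNorm f ⊤ (volume.restrict (Icc (0 : Fin 2 → ℝ) 1)) := by
  intro p hp hpq
  obtain ⟨s, hs, hqs, hsk⟩ := exists_two_mul_le_sum_idx_add_two hk hq hqEven
  have hdiv : ∫⁻ x, ENNReal.ofReal (‖Eext k (fun _ => 1) x‖ ^ p) = ⊤ :=
    lintegral_ofReal_norm_rpow_eq_top (norm_Eext_one_le_one k)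
      (lintegral_Eext_one_pow_eq_top k hs hsk) hp (hpq.trans (by exact_mod_cast hqs))
  exact ⟨hdiv, not_exists_eLpNorm_Eext_le k
    (eLpNorm_eq_top_of_lintegral_ofReal_norm_rpow_eq_top hp hdiv)⟩

/-- **Corollary 1.4**, sharpness: if `q_k = k(k+1)(k+2)/6 + 2` is an even integer, then for
every `0 < p ≤ q_k` the extension estimate fails at exponent `p`: the constant function
`f ≡ 1` has `∫_{ℝ^N} |E_k 1(x)|^p dx = ∞`, and there is no finite constant `C` with
`‖E_k f‖_{L^p(ℝ^N)} ≤ C ‖f‖_{L^∞([0,1]²)}` for all `f ∈ L^∞([0,1]²)`. -/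
theorem extension_estimate_sharp (k : ℕ) (hk : 2 ≤ k)
    (q : ℕ) (hq : (q : ℝ) = (k : ℝ) * (k + 1) * (k + 2) / 6 + 2) (hqEven : Even q) :
    ∀ p : ℝ, 0 < p → p ≤ (q : ℝ) →
      (∫⁻ x : Idx k → ℝ, ENNReal.ofReal (‖Eext k (fun _ => 1) x‖ ^ p)) = ⊤ ∧
      ¬ ∃ C : ℝ≥0∞, C < ⊤ ∧
          ∀ f : (Fin 2 → ℝ) → ℂ, Measurable f →
            eLpNorm (Eext k f) (ENNReal.ofReal p) volume ≤
              C * eLpNorm f ⊤ (volume.restrict (Icc (0 : Fin 2 → ℝ) 1)) :=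
  extension_estimate_sharp_general k hk q hq.le hqEven
end
end
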